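/- arXiv:2206.08351 — 3 statements merged into one kernel-verified Lean document; each statement's English description precedes it below -/
import Mathlib

section
/- For each degree n ≥ 2 there exists a constant C_n > 0 such that every number field K of degree n over ℚ satisfies |Cl_K| ≤ C_n · D_K^{1/2} · (log D_K)^{n-1}. -/
open NumberField

/-- Tuples of `k` positive integers with product at most `N`. -/
def landauTuples (k N : ℕ) : Finset (Fin k → ℕ) :=
  (Fintype.piFinset (fun _ : Fin k => Finset.Icc 1 N)).filter (fun a => ∏ i, a i ≤ N)

theorem mem_landauTuples {k N : ℕ} {a : Fin k → ℕ} :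
    a ∈ landauTuples k N ↔ (∀ i, 1 ≤ a i) ∧ ∏ i, a i ≤ N := by
  unfold landauTuples
  simp only [Finset.mem_filter, Fintype.mem_piFinset, Finset.mem_Icc]
  constructor
  · rintro ⟨h1, h2⟩
    exact ⟨fun i => (h1 i).1, h2⟩
  · rintro ⟨h1, h2⟩
    refine ⟨fun i => ⟨h1 i, le_trans ?_ h2⟩, h2⟩
    exact Finset.single_le_prod' (f := a) (fun i _ => h1 i) (Finset.mem_univ i)

theorem card_landauTuples_succ_le (k N : ℕ) :
    (landauTuples (k + 1) N).card ≤ ∑ a ∈ Finset.Icc 1 N, (landauTuples k (N / a)).card := by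
  classical
  have hsub : landauTuples (k + 1) N ⊆ (Finset.Icc 1 N).biUnion
      (fun a => (landauTuples k (N / a)).image (fun b => (Fin.cons a b : Fin (k + 1) → ℕ))) := by
    intro a ha
    rw [mem_landauTuples] at ha
    obtain ⟨h1, h2⟩ := ha
    simp only [Finset.mem_biUnion, Finset.mem_image, Finset.mem_Icc]
    refine ⟨a 0, ⟨h1 0, le_trans ?_ h2⟩, Fin.tail a, ?_, Fin.cons_self_tail a⟩
    · exact Finset.single_le_prod' (f := a) (fun i _ => h1 i) (Finset.mem_univ 0)
    · rw [mem_landauTuples]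
      refine ⟨fun i => h1 _, ?_⟩
      rw [Nat.le_div_iff_mul_le (h1 0), mul_comm]
      rw [Fin.prod_univ_succ] at h2
      exact h2
  refine (Finset.card_le_card hsub).trans (Finset.card_biUnion_le.trans ?_)
  exact Finset.sum_le_sum fun a _ => Finset.card_image_le

theorem card_landauTuples_le (k : ℕ) : ∀ N : ℕ, 1 ≤ N →
    ((landauTuples (k + 1) N).card : ℝ) ≤ N * (1 + Real.log N) ^ k := by
  induction k with
  | zero =>
    intro N hN
    have h := card_landauTuples_succ_le 0 N
    have h0 : ∀ M, (landauTuples 0 M).card ≤ 1 := fun M => Finset.card_le_one_of_subsingleton _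
    have : (landauTuples (0 + 1) N).card ≤ N := by
      refine h.trans ((Finset.sum_le_sum fun a _ => h0 _).trans ?_)
      simp
    simpa using this
  | succ k ih =>
    intro N hN
    have hN' : (1 : ℝ) ≤ N := by exact_mod_cast hN
    have hlog : 0 ≤ Real.log N := Real.log_nonneg hN'
    have h : ((landauTuples (k + 1 + 1) N).card : ℝ) ≤
        ∑ a ∈ Finset.Icc 1 N, ((landauTuples (k + 1) (N / a)).card : ℝ) := by
      exact_mod_cast card_landauTuples_succ_le (k + 1) N
    have hharm : ∑ a ∈ Finset.Icc 1 N, ((a : ℝ))⁻¹ ≤ 1 + Real.log N := by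
      have := harmonic_le_one_add_log N
      rw [harmonic_eq_sum_Icc] at this
      simpa using this
    calc ((landauTuples (k + 1 + 1) N).card : ℝ)
        ≤ ∑ a ∈ Finset.Icc 1 N, ((landauTuples (k + 1) (N / a)).card : ℝ) := h
      _ ≤ ∑ a ∈ Finset.Icc 1 N, ((a : ℝ))⁻¹ * (N * (1 + Real.log N) ^ k) := by
          refine Finset.sum_le_sum fun a ha => ?_
          rw [Finset.mem_Icc] at ha
          have h1 : 1 ≤ N / a := Nat.div_pos ha.2 ha.1
          have h1' : (1 : ℝ) ≤ (N / a : ℕ) := by exact_mod_cast h1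
          have h2 : ((N / a : ℕ) : ℝ) ≤ (a : ℝ)⁻¹ * N := by
            rw [inv_mul_eq_div]; exact Nat.cast_div_le
          have h3 : ((N / a : ℕ) : ℝ) ≤ N := by exact_mod_cast Nat.div_le_self N a
          have h4 : Real.log ((N / a : ℕ) : ℝ) ≤ Real.log N :=
            Real.log_le_log (by linarith) h3
          have h5 := Real.log_nonneg h1'
          rw [← mul_assoc]
          refine (ih _ h1).trans ?_
          gcongr
      _ = (∑ a ∈ Finset.Icc 1 N, ((a : ℝ))⁻¹) * (N * (1 + Real.log N) ^ k) := by
          rw [Finset.sum_mul]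
      _ ≤ (1 + Real.log N) * (N * (1 + Real.log N) ^ k) := by gcongr
      _ = N * (1 + Real.log N) ^ (k + 1) := by ring

section ideals

variable {K : Type*} [Field K] [NumberField K]

theorem landau_exists_coloring (n : ℕ) (hn : 0 < n) (hK : Module.finrank ℚ K = n) :
    ∃ c : Ideal (𝓞 K) → Fin n, ∀ P Q : Ideal (𝓞 K), P.IsPrime → Q.IsPrime → P ≠ ⊥ →
      P.under ℤ = Q.under ℤ → c P = c Q → P = Q := by
  classical
  have key : ∀ p : Ideal ℤ, ∃ f : Ideal (𝓞 K) → Fin n, ∀ P Q : Ideal (𝓞 K),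
      P.IsPrime → Q.IsPrime → P ≠ ⊥ → P.under ℤ = p → Q.under ℤ = p → f P = f Q → P = Q := by
    intro p
    by_cases hp : p.IsMaximal ∧ p ≠ ⊥
    · obtain ⟨hpm, hp0⟩ := hp
      have hcard : (IsDedekindDomain.primesOverFinset p (𝓞 K)).card ≤ n := by
        rw [← hK]
        exact Ideal.card_primesOverFinset_le_finrank (𝓞 K) ℚ K hp0
      have : Nonempty ((IsDedekindDomain.primesOverFinset p (𝓞 K)) ↪ Fin n) :=
        Function.Embedding.nonempty_of_card_le (by rw [Fintype.card_coe, Fintype.card_fin]; exact hcard)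
      obtain ⟨e⟩ := this
      refine ⟨fun P => if h : P ∈ IsDedekindDomain.primesOverFinset p (𝓞 K) then e ⟨P, h⟩
        else ⟨0, hn⟩, ?_⟩
      intro P Q hP hQ _ hPp hQp hf
      have hPm : P ∈ IsDedekindDomain.primesOverFinset p (𝓞 K) :=
        (IsDedekindDomain.mem_primesOverFinset_iff hp0 _).mpr ⟨hP, ⟨hPp.symm⟩⟩
      have hQm : Q ∈ IsDedekindDomain.primesOverFinset p (𝓞 K) :=
        (IsDedekindDomain.mem_primesOverFinset_iff hp0 _).mpr ⟨hQ, ⟨hQp.symm⟩⟩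
      simp only [hPm, hQm, dif_pos] at hf
      exact congrArg Subtype.val (e.injective hf)
    · refine ⟨fun _ => ⟨0, hn⟩, ?_⟩
      intro P Q hP hQ hP0 hPp _ _
      exfalso
      apply hp
      have : P.IsMaximal := hP.isMaximal hP0
      rw [← hPp]
      exact ⟨inferInstance, Ideal.under_ne_bot ℤ hP0⟩
  choose f hf using key
  refine ⟨fun P => f (P.under ℤ) P, ?_⟩
  intro P Q hP hQ hP0 hPQ hc
  refine hf (P.under ℤ) P Q hP hQ hP0 rfl hPQ.symm ?_
  simpa [hPQ] using hc

theorem landau_factorization (P : Ideal (𝓞 K)) (hP : P.IsPrime) (hP0 : P ≠ ⊥) :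
    0 < (Ideal.absNorm P).factorization (Ideal.absNorm (P.under ℤ)) ∧
    ∀ Q : Ideal (𝓞 K), Q.IsPrime → Q ≠ ⊥ → Q.under ℤ ≠ P.under ℤ →
      (Ideal.absNorm Q).factorization (Ideal.absNorm (P.under ℤ)) = 0 := by
  have : NeZero P := ⟨hP0⟩
  have hp : (Ideal.absNorm (P.under ℤ)).Prime := Nat.absNorm_under_prime P
  constructor
  · refine hp.factorization_pos_of_dvd ?_ (Int.absNorm_under_dvd_absNorm P)
    rwa [Ne, Ideal.absNorm_eq_zero_iff]
  · intro Q hQ hQ0 hne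
    have : NeZero Q := ⟨hQ0⟩
    have hq : (Ideal.absNorm (Q.under ℤ)).Prime := Nat.absNorm_under_prime Q
    have h := Ideal.absNorm_eq_pow_inertiaDeg' Q hq
    rw [h, hq.factorization_pow, Finsupp.single_apply, if_neg]
    intro heq
    apply hne
    have h1 : Q.under ℤ = Ideal.span {(Ideal.absNorm (Q.under ℤ) : ℤ)} :=
      (Ideal.over_def Q (Ideal.span {(Ideal.absNorm (Q.under ℤ) : ℤ)})).symm
    have h2 : P.under ℤ = Ideal.span {(Ideal.absNorm (P.under ℤ) : ℤ)} :=
      (Ideal.over_def P (Ideal.span {(Ideal.absNorm (P.under ℤ) : ℤ)})).symm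
    rw [h1, h2, heq]

open Classical in
theorem landau_count (n : ℕ) (c : Ideal (𝓞 K) → Fin n)
    (hc : ∀ P Q : Ideal (𝓞 K), P.IsPrime → Q.IsPrime → P ≠ ⊥ →
      P.under ℤ = Q.under ℤ → c P = c Q → P = Q)
    (P : Ideal (𝓞 K)) (hP : P.IsPrime) (hP0 : P ≠ ⊥) (s : Multiset (Ideal (𝓞 K)))
    (hs : ∀ Q ∈ s, Q.IsPrime ∧ Q ≠ ⊥ ∧ c Q = c P) :
    ((s.map Ideal.absNorm).prod).factorization (Ideal.absNorm (P.under ℤ)) =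
      s.count P * (Ideal.absNorm P).factorization (Ideal.absNorm (P.under ℤ)) := by
  induction s using Multiset.induction_on with
  | empty => simp
  | cons Q s ih =>
    have hQ := hs Q (Multiset.mem_cons_self Q s)
    have hs' : ∀ R ∈ s, R.IsPrime ∧ R ≠ ⊥ ∧ c R = c P :=
      fun R hR => hs R (Multiset.mem_cons_of_mem hR)
    have hne : (s.map Ideal.absNorm).prod ≠ 0 := by
      rw [Ne, Multiset.prod_eq_zero_iff, Multiset.mem_map]
      rintro ⟨R, hR, h0⟩
      exact (hs' R hR).2.1 (Ideal.absNorm_eq_zero_iff.mp h0)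
    have hQn : Ideal.absNorm Q ≠ 0 := by
      rw [Ne, Ideal.absNorm_eq_zero_iff]; exact hQ.2.1
    rw [Multiset.map_cons, Multiset.prod_cons, Nat.factorization_mul hQn hne, Finsupp.add_apply,
      ih hs', Multiset.count_cons]
    by_cases h : P = Q
    · subst h
      simp only [if_true]
      ring
    · rw [if_neg h, (landau_factorization P hP hP0).2 Q hQ.1 hQ.2.1]
      · simp
      · intro hu
        exact h (hc P Q hP hQ.1 hP0 hu.symm hQ.2.2.symm)

open Classical in
/-- The tuple of integers attached to an ideal. -/
noncomputable def landauMap (n : ℕ) (c : Ideal (𝓞 K) → Fin n) (I : Ideal (𝓞 K)) : Fin n → ℕ :=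
  fun j => (((UniqueFactorizationMonoid.normalizedFactors I).filter
    (fun Q => c Q = j)).map Ideal.absNorm).prod

theorem landau_factor_prime {I Q : Ideal (𝓞 K)}
    (hQ : Q ∈ UniqueFactorizationMonoid.normalizedFactors I) : Q.IsPrime ∧ Q ≠ ⊥ := by
  have h := UniqueFactorizationMonoid.prime_of_normalized_factor Q hQ
  exact ⟨Ideal.isPrime_of_prime h, h.ne_zero⟩

theorem prod_landauMap (n : ℕ) (c : Ideal (𝓞 K) → Fin n) (I : Ideal (𝓞 K)) (hI : I ≠ ⊥) :
    ∏ j, landauMap n c I j = Ideal.absNorm I := by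
  classical
  have h2 : Ideal.absNorm I =
      ((UniqueFactorizationMonoid.normalizedFactors I).map Ideal.absNorm).prod := by
    conv_lhs => rw [← Ideal.prod_normalizedFactors_eq_self hI]
    exact map_multiset_prod _ _
  rw [h2]
  unfold landauMap
  generalize UniqueFactorizationMonoid.normalizedFactors I = s
  induction s using Multiset.induction_on with
  | empty => simp
  | cons Q s ih =>
    rw [Multiset.map_cons, Multiset.prod_cons, ← ih]
    have : ∀ j, (((Q ::ₘ s).filter (fun Q => c Q = j)).map Ideal.absNorm).prod =
        (if c Q = j then Ideal.absNorm Q else 1) *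
          ((s.filter (fun Q => c Q = j)).map Ideal.absNorm).prod := by
      intro j
      by_cases h : c Q = j
      · simp [h]
      · simp [h]
    simp only [this]
    rw [Finset.prod_mul_distrib, Finset.prod_ite_eq]
    simp

theorem landauMap_injective (n : ℕ) (c : Ideal (𝓞 K) → Fin n)
    (hc : ∀ P Q : Ideal (𝓞 K), P.IsPrime → Q.IsPrime → P ≠ ⊥ →
      P.under ℤ = Q.under ℤ → c P = c Q → P = Q)
    (I J : Ideal (𝓞 K)) (hI : I ≠ ⊥) (hJ : J ≠ ⊥) (h : landauMap n c I = landauMap n c J) :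
    I = J := by
  classical
  rw [← Ideal.prod_normalizedFactors_eq_self hI, ← Ideal.prod_normalizedFactors_eq_self hJ]
  congr 1
  ext P
  by_cases hP : P.IsPrime ∧ P ≠ ⊥
  · obtain ⟨hP, hP0⟩ := hP
    have hh : ∀ L : Ideal (𝓞 K),
        (landauMap n c L (c P)).factorization (Ideal.absNorm (P.under ℤ)) =
        (UniqueFactorizationMonoid.normalizedFactors L).count P *
          (Ideal.absNorm P).factorization (Ideal.absNorm (P.under ℤ)) := by
      intro L
      have := landau_count n c hc P hP hP0
        ((UniqueFactorizationMonoid.normalizedFactors L).filter (fun Q => c Q = c P)) (by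
          intro Q hQ
          rw [Multiset.mem_filter] at hQ
          exact ⟨(landau_factor_prime hQ.1).1, (landau_factor_prime hQ.1).2, hQ.2⟩)
      rw [Multiset.count_filter, if_pos rfl] at this
      rw [← this]
      unfold landauMap
      congr!
    have h1 := hh I
    rw [h, hh J] at h1
    exact (Nat.eq_of_mul_eq_mul_right (landau_factorization P hP hP0).1 h1).symm
  · rw [Multiset.count_eq_zero_of_notMem, Multiset.count_eq_zero_of_notMem]
    · exact fun hm => hP (landau_factor_prime hm)
    · exact fun hm => hP (landau_factor_prime hm)

theorem landau_classNumber_le (n N : ℕ) (hn : 0 < n) (hK : Module.finrank ℚ K = n)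
    (hN : ∀ C : ClassGroup (𝓞 K), ∃ I : nonZeroDivisors (Ideal (𝓞 K)),
      ClassGroup.mk0 I = C ∧ Ideal.absNorm (I : Ideal (𝓞 K)) ≤ N) :
    NumberField.classNumber K ≤ (landauTuples n N).card := by
  classical
  obtain ⟨c, hc⟩ := landau_exists_coloring n hn hK
  choose f hf1 hf2 using hN
  have hne : ∀ C, (f C : Ideal (𝓞 K)) ≠ ⊥ := fun C => nonZeroDivisors.coe_ne_zero (f C)
  unfold NumberField.classNumber
  rw [← Finset.card_univ]
  refine Finset.card_le_card_of_injOn (fun C => landauMap n c (f C : Ideal (𝓞 K))) ?_ ?_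
  · intro C _
    rw [Finset.mem_coe, mem_landauTuples]
    have hprod := prod_landauMap n c (f C : Ideal (𝓞 K)) (hne C)
    refine ⟨fun i => ?_, hprod.trans_le (hf2 C)⟩
    rw [Nat.one_le_iff_ne_zero]
    intro h0
    rw [Finset.prod_eq_zero (Finset.mem_univ i) h0] at hprod
    exact hne C (Ideal.absNorm_eq_zero_iff.mp hprod.symm)
  · intro C _ C' _ h
    have := landauMap_injective n c hc _ _ (hne C) (hne C') h
    rw [← hf1 C, ← hf1 C', Subtype.ext this]

end ideals

/-- **Landau/Minkowski bound.** For each degree `n ≥ 2` there exists a constant `C > 0`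
such that every number field `K` of degree `n` over `ℚ` satisfies
`|Cl_K| ≤ C · D_K^{1/2} · (log D_K)^{n-1}`. -/
theorem class_number_landau_bound (n : ℕ) (hn : 2 ≤ n) :
    ∃ C : ℝ, 0 < C ∧ ∀ (K : Type*) [Field K] [NumberField K],
      Module.finrank ℚ K = n →
      (NumberField.classNumber K : ℝ) ≤
        C * ((NumberField.discr K).natAbs : ℝ) ^ ((1 : ℝ) / 2) *
          (Real.log ((NumberField.discr K).natAbs : ℝ)) ^ (n - 1) := by
  refine ⟨2 ^ n * ((n : ℝ) + 2) ^ (n - 1), by positivity, ?_⟩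
  intro K _ _ hK
  have hD : 3 ≤ (NumberField.discr K).natAbs := by
    have := NumberField.abs_discr_gt_two (K := K) (by omega)
    rw [Int.abs_eq_natAbs] at this
    omega
  set D : ℝ := ((NumberField.discr K).natAbs : ℝ) with hDdef
  have hD3 : (3 : ℝ) ≤ D := by rw [hDdef]; exact_mod_cast hD
  have hDabs : ((|NumberField.discr K| : ℤ) : ℝ) = D := by
    rw [hDdef, Nat.cast_natAbs]
  have hlogD : 1 ≤ Real.log D := by
    rw [Real.le_log_iff_exp_le (by linarith)]
    linarith [Real.exp_one_lt_d9]
  set M : ℝ := 2 ^ n * √D with hM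
  have hsq : 1 ≤ √D := by
    rw [Real.one_le_sqrt]; linarith
  have hM1 : 1 ≤ M := by
    have : (1 : ℝ) ≤ 2 ^ n := one_le_pow₀ (by norm_num)
    nlinarith
  have hbound : ∀ C : ClassGroup (𝓞 K), ∃ I : nonZeroDivisors (Ideal (𝓞 K)),
      ClassGroup.mk0 I = C ∧ Ideal.absNorm (I : Ideal (𝓞 K)) ≤ ⌊M⌋₊ := by
    intro C
    obtain ⟨I, hI, hle⟩ := NumberField.exists_ideal_in_class_of_norm_le C
    refine ⟨I, hI, Nat.le_floor (hle.trans ?_)⟩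
    rw [hK, ← Int.cast_abs, hDabs]
    have hr : NumberField.InfinitePlace.nrComplexPlaces K ≤ n := by
      have := NumberField.InfinitePlace.card_add_two_mul_card_eq_rank K
      omega
    have h1 : (4 / Real.pi) ^ NumberField.InfinitePlace.nrComplexPlaces K ≤ (2 : ℝ) ^ n := by
      have h4 : 4 / Real.pi ≤ 2 := by
        rw [div_le_iff₀ Real.pi_pos]; linarith [Real.pi_gt_three]
      calc (4 / Real.pi) ^ NumberField.InfinitePlace.nrComplexPlaces K
          ≤ 2 ^ NumberField.InfinitePlace.nrComplexPlaces K :=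
            pow_le_pow_left₀ (by positivity) h4 _
        _ ≤ 2 ^ n := pow_le_pow_right₀ (by norm_num) hr
    have h2 : (n.factorial : ℝ) / (n : ℝ) ^ n ≤ 1 := by
      refine div_le_one_of_le₀ ?_ (by positivity)
      exact_mod_cast Nat.factorial_le_pow n
    have h3 : (n.factorial : ℝ) / (n : ℝ) ^ n * √D ≤ √D := by
      have := Real.sqrt_nonneg D
      nlinarith
    rw [hM]
    exact mul_le_mul h1 h3 (by positivity) (by positivity)
  have hcl := landau_classNumber_le n ⌊M⌋₊ (by omega) hK hbound
  obtain ⟨k, rfl⟩ : ∃ k, n = k + 1 := ⟨n - 1, by omega⟩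
  have hfl : 1 ≤ ⌊M⌋₊ := Nat.le_floor (by simpa using hM1)
  have hflM : ((⌊M⌋₊ : ℕ) : ℝ) ≤ M := Nat.floor_le (by linarith)
  have hfl' : (1 : ℝ) ≤ (⌊M⌋₊ : ℕ) := by exact_mod_cast hfl
  have hT := card_landauTuples_le k ⌊M⌋₊ hfl
  have hlogM : 1 + Real.log (⌊M⌋₊ : ℕ) ≤ (((k + 1 : ℕ) : ℝ) + 2) * Real.log D := by
    have h1 : Real.log (⌊M⌋₊ : ℕ) ≤ Real.log M := Real.log_le_log (by linarith) hflM
    have h2 : Real.log M = ((k + 1 : ℕ) : ℝ) * Real.log 2 + Real.log D / 2 := by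
      rw [hM, Real.log_mul (by positivity) (by positivity), Real.log_pow,
        Real.log_sqrt (by linarith)]
    have h3 : Real.log 2 ≤ Real.log D := Real.log_le_log (by norm_num) (by linarith)
    have h4 : ((k + 1 : ℕ) : ℝ) * Real.log 2 ≤ ((k + 1 : ℕ) : ℝ) * Real.log D := by gcongr
    linarith
  have hlog0 := Real.log_nonneg hfl'
  rw [← Real.sqrt_eq_rpow, Nat.add_sub_cancel]
  calc (NumberField.classNumber K : ℝ) ≤ ((landauTuples (k + 1) ⌊M⌋₊).card : ℝ) := by
        exact_mod_cast hcl
    _ ≤ (⌊M⌋₊ : ℕ) * (1 + Real.log (⌊M⌋₊ : ℕ)) ^ k := hT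
    _ ≤ M * ((((k + 1 : ℕ) : ℝ) + 2) * Real.log D) ^ k := by gcongr
    _ = 2 ^ (k + 1) * (((k + 1 : ℕ) : ℝ) + 2) ^ k * √D * Real.log D ^ k := by
        rw [hM, mul_pow]; ring
end

section
/- Let d > 3 be a squarefree integer, K = ℚ(√−d), and ℓ an odd prime. Suppose p₁, …, p_M are distinct rational primes such that for each j: p_j does not divide 2d, p_j splits in K (i.e. p_j𝒪_K is a product of two distinct prime ideals), and p_j < (1/4)·d^{1/(2ℓ)}. Then M · |Cl_K[ℓ]| ≤ |Cl_K|. -/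
open NumberField IntermediateField

/-- The imaginary quadratic field `ℚ(√-d)`, realized inside `ℂ` by adjoining
`i·√d` to `ℚ`. -/
noncomputable def Qneg (d : ℕ) : IntermediateField ℚ ℂ :=
  ℚ⟮(Complex.I * (Real.sqrt d : ℂ) : ℂ)⟯

namespace SSP

/-- the generator -/
noncomputable def th (d : ℕ) : ℂ := Complex.I * (Real.sqrt d : ℂ)

lemma th_sq (d : ℕ) : th d * th d = -(d : ℂ) := by
  have h : ((Real.sqrt d : ℂ)) * (Real.sqrt d : ℂ) = (d : ℂ) := by
    rw [← Complex.ofReal_mul, Real.mul_self_sqrt (Nat.cast_nonneg d)]; simp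
  unfold th
  linear_combination (Complex.I * Complex.I) * h + (d : ℂ) * Complex.I_mul_I

lemma conj_th (d : ℕ) : (starRingEnd ℂ) (th d) = - th d := by
  simp [th]

lemma mem_form (d : ℕ) (z : ℂ) (hz : z ∈ Qneg d) :
    ∃ x y : ℚ, z = (x : ℂ) + y * th d := by
  change z ∈ IntermediateField.adjoin ℚ _ at hz
  induction hz using IntermediateField.adjoin_induction with
  | mem x hx => 
    refine ⟨0, 1, ?_⟩
    rw [Set.mem_singleton_iff] at hx
    simp [hx, th]
  | algebraMap x => exact ⟨x, 0, by simp⟩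
  | add a b _ _ ha hb =>
    obtain ⟨x, y, rfl⟩ := ha
    obtain ⟨x', y', rfl⟩ := hb
    exact ⟨x + x', y + y', by push_cast; ring⟩
  | mul a b _ _ ha hb =>
    obtain ⟨x, y, rfl⟩ := ha
    obtain ⟨x', y', rfl⟩ := hb
    exact ⟨x * x' - d * y * y', x * y' + y * x', by
      push_cast; linear_combination (y * y' : ℂ) * th_sq d⟩
  | inv a _ ha =>
    obtain ⟨x, y, rfl⟩ := ha
    by_cases h0 : (x : ℂ) + y * th d = 0
    · exact ⟨0, 0, by simp [h0]⟩
    have h1 : (x : ℂ) - y * th d ≠ 0 := by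
      intro h
      apply h0
      have := congrArg (starRingEnd ℂ) h
      simpa [conj_th] using this
    have h2 : ((x : ℂ) ^ 2 + d * y ^ 2) ≠ 0 := by
      have := mul_ne_zero h0 h1
      intro h
      apply this
      linear_combination h - (y : ℂ)^2 * th_sq d
    refine ⟨x / (x ^ 2 + d * y ^ 2), - y / (x ^ 2 + d * y ^ 2), ?_⟩
    push_cast
    apply inv_eq_of_mul_eq_one_right
    have h3 : ((x : ℂ) + y * th d) * (x - y * th d) = x ^ 2 + d * y ^ 2 := by
      linear_combination -(y : ℂ) ^ 2 * th_sq d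
    calc _ = (((x : ℂ) + y * th d) * (x - y * th d)) / (x ^ 2 + d * y ^ 2) := by ring
      _ = 1 := by rw [h3, div_self h2]

lemma th_mem (d : ℕ) : th d ∈ Qneg d := IntermediateField.mem_adjoin_simple_self ℚ _

lemma th_root (d : ℕ) :
    Polynomial.aeval (th d) (Polynomial.X ^ 2 + Polynomial.C (d : ℚ)) = 0 := by
  simp [pow_two, th_sq]

lemma monic (d : ℕ) : (Polynomial.X ^ 2 + Polynomial.C (d : ℚ)).Monic :=
  Polynomial.monic_X_pow_add_C _ two_ne_zero

lemma th_int (d : ℕ) : IsIntegral ℚ (th d) :=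
  ⟨_, monic d, by simpa [Polynomial.aeval_def] using th_root d⟩

instance (d : ℕ) : FiniteDimensional ℚ (Qneg d) :=
  IntermediateField.adjoin.finiteDimensional (th_int d)

instance (d : ℕ) : NumberField (Qneg d) where

lemma finrank_le (d : ℕ) : Module.finrank ℚ (Qneg d) ≤ 2 := by
  have h := IntermediateField.adjoin.finrank (th_int d)
  change Module.finrank ℚ (Qneg d) = _ at h
  rw [h]
  calc _ ≤ (Polynomial.X ^ 2 + Polynomial.C (d : ℚ)).natDegree :=
        Polynomial.natDegree_le_natDegree (minpoly.min ℚ (th d) (monic d) (th_root d))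
    _ = 2 := Polynomial.natDegree_X_pow_add_C

/-- the inclusion -/
noncomputable def vl (d : ℕ) : Qneg d →ₐ[ℚ] ℂ :=
  RingHom.toRatAlgHom ((Qneg d).val : Qneg d →+* ℂ)

/-- conjugate embedding -/
noncomputable def cj (d : ℕ) : Qneg d →ₐ[ℚ] ℂ :=
  RingHom.toRatAlgHom ((starRingEnd ℂ).comp ((Qneg d).val : Qneg d →+* ℂ))

lemma vl_apply (d : ℕ) (z : Qneg d) : vl d z = (z : ℂ) := rfl

lemma cj_apply (d : ℕ) (z : Qneg d) : cj d z = (starRingEnd ℂ) (z : ℂ) := rfl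

lemma ne (d : ℕ) (hd : 0 < d) : vl d ≠ cj d := by
  intro h
  have := DFunLike.congr_fun h ⟨th d, th_mem d⟩
  rw [cj_apply, vl_apply] at this
  simp only [conj_th] at this
  have h0 : th d = 0 := by linear_combination this / 2
  have := th_sq d
  rw [h0] at this
  simp at this
  omega

lemma card_le (d : ℕ) : Fintype.card (Qneg d →ₐ[ℚ] ℂ) ≤ 2 := by
  rw [AlgHom.card]; exact finrank_le d

lemma univ_eq [DecidableEq (Qneg d →ₐ[ℚ] ℂ)] (hd : 0 < d) :
    (Finset.univ : Finset (Qneg d →ₐ[ℚ] ℂ)) = {vl d, cj d} := by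
  symm
  apply Finset.eq_of_subset_of_card_le (Finset.subset_univ _)
  rw [Finset.card_pair (ne d hd)]
  exact card_le d

lemma finrank_eq (d : ℕ) (hd : 0 < d) : Module.finrank ℚ (Qneg d) = 2 := by
  classical
  rw [← AlgHom.card ℚ (Qneg d) ℂ, ← Finset.card_univ, univ_eq hd, Finset.card_pair (ne d hd)]

lemma norm_eq (d : ℕ) (hd : 0 < d) (z : Qneg d) :
    ((Algebra.norm ℚ z : ℚ) : ℂ) = z * (starRingEnd ℂ) (z : ℂ) := by
  classical
  have := Algebra.norm_eq_prod_embeddings ℚ ℂ z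
  rw [univ_eq hd, Finset.prod_pair (ne d hd)] at this
  simpa [cj_apply, vl_apply] using this

lemma trace_eq (d : ℕ) (hd : 0 < d) (z : Qneg d) :
    ((Algebra.trace ℚ _ z : ℚ) : ℂ) = z + (starRingEnd ℂ) (z : ℂ) := by
  classical
  have := trace_eq_sum_embeddings (K := ℚ) ℂ (x := z)
  rw [univ_eq hd, Finset.sum_pair (ne d hd)] at this
  simpa [cj_apply, vl_apply] using this

lemma sqfree_int (d : ℕ) (hsq : Squarefree d) (m : ℤ) (y : ℚ) (h : (m : ℚ) = d * y ^ 2) :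
    ∃ b : ℤ, y = b := by
  have hden : (y.den : ℚ) ≠ 0 := by exact_mod_cast y.den_nz
  have h1 : (m : ℚ) * y.den ^ 2 = d * y.num ^ 2 := by
    rw [h, ← Rat.mul_den_eq_num]; ring
  have h2 : m * (y.den : ℤ) ^ 2 = d * y.num ^ 2 := by exact_mod_cast h1
  have h3 : (y.den : ℤ) ^ 2 ∣ d * y.num ^ 2 := ⟨m, by rw [← h2]; ring⟩
  have hc : IsCoprime ((y.den : ℤ) ^ 2) (y.num ^ 2) := by
    apply IsCoprime.pow
    rw [Int.isCoprime_iff_gcd_eq_one, Int.gcd_comm]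
    exact y.reduced
  have h4 := hc.dvd_of_dvd_mul_right h3
  have h5 : y.den * y.den ∣ d := by rw [pow_two] at h4; exact_mod_cast h4
  have h6 := Nat.isUnit_iff.mp (hsq _ h5)
  exact ⟨y.num, by rw [Rat.coe_int_num_of_den_eq_one h6]⟩

lemma int_form (d : ℕ) (hd : 0 < d) (hsq : Squarefree d) (z : 𝓞 (Qneg d)) :
    ∃ a b : ℤ, 4 * Algebra.norm ℤ z = a ^ 2 + d * b ^ 2 := by
  obtain ⟨x, y, hz⟩ := mem_form d ((z : Qneg d) : ℂ) (z : Qneg d).2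
  have hn := norm_eq d hd z
  have ht := trace_eq d hd z
  have e1 : Algebra.norm ℚ (z : Qneg d) = ((Algebra.norm ℤ z : ℤ) : ℚ) :=
    (Algebra.coe_norm_int z).symm
  have e2 : Algebra.trace ℚ _ (z : Qneg d) = ((Algebra.trace ℤ _ z : ℤ) : ℚ) :=
    (Algebra.coe_trace_int z).symm
  rw [e1, hz] at hn
  rw [e2, hz] at ht
  simp only [map_add, map_mul, conj_th, map_ratCast] at hn ht
  set n := Algebra.norm ℤ z
  set a := Algebra.trace ℤ _ z
  have ht' : (a : ℚ) = 2 * x := by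
    have : (((a : ℚ)) : ℂ) = ((2 * x : ℚ) : ℂ) := by
      push_cast at ht ⊢
      linear_combination ht
    exact_mod_cast this
  have hn' : (n : ℚ) = x ^ 2 + d * y ^ 2 := by
    have : (((n : ℚ)) : ℂ) = ((x ^ 2 + d * y ^ 2 : ℚ) : ℂ) := by
      push_cast at hn ⊢
      linear_combination hn - (y : ℂ) ^ 2 * th_sq d
    exact_mod_cast this
  obtain ⟨b, hb⟩ := sqfree_int d hsq (4 * n - a ^ 2) (2 * y) (by
    push_cast; rw [ht', hn']; ring)
  refine ⟨a, b, ?_⟩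
  have : (4 * n : ℚ) = a ^ 2 + d * b ^ 2 := by rw [← hb, ht', hn']; ring
  exact_mod_cast this

lemma absNorm_both (d : ℕ) (hd : 0 < d) (p : ℕ) (hp : p.Prime) (P Q : Ideal (𝓞 (Qneg d)))
    (hP : P.IsPrime) (hQ : Q.IsPrime) (h : Ideal.span {(p : 𝓞 (Qneg d))} = P * Q) :
    Ideal.absNorm P = p ∧ Ideal.absNorm Q = p := by
  have h1 := congrArg Ideal.absNorm h
  rw [map_mul, Ideal.absNorm_span_natCast, RingOfIntegers.rank, finrank_eq d hd] at h1
  have hP1 : Ideal.absNorm P ≠ 1 := by rw [Ne, Ideal.absNorm_eq_one_iff]; exact hP.ne_top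
  have hQ1 : Ideal.absNorm Q ≠ 1 := by rw [Ne, Ideal.absNorm_eq_one_iff]; exact hQ.ne_top
  exact (hp.mul_eq_prime_sq_iff hP1 hQ1).mp h1.symm

lemma not_sq (p q ℓ : ℕ) (hp : p.Prime) (hq : q.Prime) (hpq : p ≠ q) (ho : Odd ℓ) (a : ℕ)
    (h : 4 * (p * q) ^ ℓ = a ^ 2) : False := by
  have h2 : 2 ∣ a := Nat.prime_two.dvd_of_dvd_pow (n := 2) (h ▸ ⟨2 * (p * q) ^ ℓ, by ring⟩)
  obtain ⟨c, rfl⟩ := h2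
  have h3 : (p * q) ^ ℓ = c ^ 2 := by nlinarith
  have h4 := congrArg (fun n => n.factorization p) h3
  simp only [Nat.factorization_pow, Nat.factorization_mul hp.ne_zero hq.ne_zero,
    Finsupp.smul_apply, Finsupp.add_apply, hp.factorization_self, smul_eq_mul] at h4
  rw [Nat.factorization_eq_zero_of_not_dvd
    (fun hh => hpq ((Nat.prime_dvd_prime_iff_eq hp hq).mp hh))] at h4
  obtain ⟨k, rfl⟩ := ho
  omega

lemma size (d ℓ p q : ℕ) (hl : 0 < ℓ)
    (hp : (p : ℝ) < (1 / 4) * (d : ℝ) ^ ((1 : ℝ) / (2 * ℓ)))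
    (hq : (q : ℝ) < (1 / 4) * (d : ℝ) ^ ((1 : ℝ) / (2 * ℓ))) :
    4 * (p * q) ^ ℓ < d ∨ d = 0 := by
  rcases Nat.eq_zero_or_pos d with h0 | h0
  · exact Or.inr h0
  left
  set t := (d : ℝ) ^ ((1 : ℝ) / (2 * ℓ)) with ht
  have htp : 0 < t := Real.rpow_pos_of_pos (by exact_mod_cast h0) _
  have hpow : (t * t) ^ ℓ = d := by
    rw [← pow_two, ← pow_mul, ht, ← Real.rpow_natCast, ← Real.rpow_mul (by positivity)]
    have : (1 : ℝ) / (2 * ℓ) * ((2 * ℓ : ℕ) : ℝ) = 1 := by push_cast; field_simp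
    rw [this, Real.rpow_one]
  have h1 : (p * q : ℝ) ≤ (1/16) * (t * t) := by
    calc (p * q : ℝ) ≤ (1/4 * t) * (1/4 * t) := by gcongr
      _ = _ := by ring
  have h2 : (p * q : ℝ) ^ ℓ ≤ (1/16) ^ ℓ * d := by
    rw [← hpow, ← mul_pow]; gcongr
  have h3 : (1/16 : ℝ) ^ ℓ ≤ 1/16 := pow_le_of_le_one (by norm_num) (by norm_num) hl.ne'
  have hd : (0 : ℝ) < d := by exact_mod_cast h0
  have : (4 * (p * q) ^ ℓ : ℝ) < d := by nlinarith
  exact_mod_cast this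

end SSP

/-- Let `d > 3` be squarefree, `K = ℚ(√-d)`, and `ℓ` an odd prime. If `p₁, …, p_M` are
distinct rational primes, each not dividing `2d`, each split in `K`, and each
`< (1/4)·d^{1/(2ℓ)}`, then `M · |Cl_K[ℓ]| ≤ |Cl_K|`. -/
theorem small_split_primes_bound_torsion (d : ℕ) (hd : 3 < d) (hsq : Squarefree d)
    (ℓ : ℕ) (hℓ : ℓ.Prime) (hodd : Odd ℓ)
    (M : ℕ) (p : Fin M → ℕ) (hinj : Function.Injective p)
    (hprime : ∀ j, (p j).Prime)
    (hndvd : ∀ j, ¬ p j ∣ 2 * d)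
    (hsplit : ∀ j, ∃ P Q : Ideal (𝓞 (Qneg d)), P ≠ Q ∧ P.IsPrime ∧ Q.IsPrime ∧
      Ideal.span {(p j : 𝓞 (Qneg d))} = P * Q)
    (hsize : ∀ j, (p j : ℝ) < (1 / 4) * (d : ℝ) ^ ((1 : ℝ) / (2 * ℓ))) :
    M * Nat.card {c : ClassGroup (𝓞 (Qneg d)) // c ^ ℓ = 1} ≤
      Nat.card (ClassGroup (𝓞 (Qneg d))) := by
  classical
  have hd0 : 0 < d := by omega
  choose P Q hPQ hP hQ hspan using hsplit
  have hp0 : ∀ j, (Ideal.span {(p j : 𝓞 (Qneg d))}) ≠ 0 := by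
    intro j h
    rw [Submodule.zero_eq_bot, Ideal.span_singleton_eq_bot] at h
    exact (hprime j).ne_zero (by exact_mod_cast h)
  have hP0 : ∀ j, P j ∈ nonZeroDivisors (Ideal (𝓞 (Qneg d))) := by
    intro j
    rw [mem_nonZeroDivisors_iff_ne_zero]
    intro h; apply hp0 j; rw [hspan, h, zero_mul]
  have hQ0 : ∀ j, Q j ∈ nonZeroDivisors (Ideal (𝓞 (Qneg d))) := by
    intro j
    rw [mem_nonZeroDivisors_iff_ne_zero]
    intro h; apply hp0 j; rw [hspan, h, mul_zero]
  let C : Fin M → ClassGroup (𝓞 (Qneg d)) := fun j => ClassGroup.mk0 ⟨P j, hP0 j⟩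
  have hCQ : ∀ j, C j * ClassGroup.mk0 ⟨Q j, hQ0 j⟩ = 1 := by
    intro j
    rw [← map_mul, ClassGroup.mk0_eq_one_iff]
    change (P j * Q j).IsPrincipal
    rw [← hspan]
    exact ⟨_, rfl⟩
  have key : ∀ i j, C i ^ ℓ = C j ^ ℓ → i = j := by
    intro i j hij
    by_contra hne
    have h1 : ClassGroup.mk0 ((⟨P i, hP0 i⟩ : nonZeroDivisors (Ideal (𝓞 (Qneg d)))) ^ ℓ
        * ⟨Q j, hQ0 j⟩ ^ ℓ) = 1 := by
      rw [map_mul, map_pow, map_pow]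
      change C i ^ ℓ * _ = 1
      rw [hij, ← mul_pow, hCQ, one_pow]
    rw [ClassGroup.mk0_eq_one_iff] at h1
    change (P i ^ ℓ * Q j ^ ℓ).IsPrincipal at h1
    obtain ⟨z, hz⟩ := h1
    change _ = Ideal.span {z} at hz
    have hN := congrArg Ideal.absNorm hz
    rw [map_mul, map_pow, map_pow, Ideal.absNorm_span_singleton,
      (SSP.absNorm_both d hd0 (p i) (hprime i) _ _ (hP i) (hQ i) (hspan i)).1,
      (SSP.absNorm_both d hd0 (p j) (hprime j) _ _ (hP j) (hQ j) (hspan j)).2, ← mul_pow] at hN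
    obtain ⟨a, b, hab⟩ := SSP.int_form d hd0 hsq z
    have hnn : 0 ≤ Algebra.norm ℤ z := by
      have : (0 : ℤ) ≤ a ^ 2 + d * b ^ 2 := by positivity
      omega
    have hN' : (((p i * p j) ^ ℓ : ℕ) : ℤ) = Algebra.norm ℤ z := by
      rw [hN]; exact Int.natAbs_of_nonneg hnn
    rw [← hN'] at hab
    have hs := (SSP.size d ℓ _ _ hℓ.pos (hsize i) (hsize j)).resolve_right hd0.ne'
    have hb : b = 0 := by
      by_contra hb
      have hb2 : 0 < b ^ 2 := by positivity
      have hs' : (4 * ((p i * p j) ^ ℓ : ℕ) : ℤ) < d := by exact_mod_cast hs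
      nlinarith [sq_nonneg a]
    apply SSP.not_sq (p i) (p j) ℓ (hprime i) (hprime j) (fun h => hne (hinj h)) hodd a.natAbs
    zify
    rw [sq_abs]
    rw [hb] at hab
    push_cast at hab
    linarith
  have hcard := Nat.card_le_card_of_injective
    (fun x : Fin M × {c : ClassGroup (𝓞 (Qneg d)) // c ^ ℓ = 1} => C x.1 * x.2.1) (by
      rintro ⟨i, c, hc⟩ ⟨j, c', hc'⟩ h
      simp only at h
      have hij : i = j := by
        apply key
        have := congrArg (· ^ ℓ) h
        simpa [mul_pow, hc, hc'] using this
      subst hij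
      have := mul_left_cancel h
      subst this
      rfl)
  simpa [Nat.card_prod] using hcard
end

section
/- (Ellenberg–Venkatesh criterion) Fix a degree n ≥ 2, an integer ℓ ≥ 2, a real number η < 1/(2ℓ(n−1)), and ε > 0. There exists a constant C = C(n,ℓ,η,ε) with the following property: if K/ℚ is a number field of degree n and 𝔭₁, …, 𝔭_M are M distinct prime ideals of 𝒪_K such that each 𝔭_j has absolute norm 𝔑(𝔭_j) < D_K^η, each 𝔭_j is unramified in K/ℚ, and no 𝔭_j is an extension of a prime ideal from a proper subfield of K, then |Cl_K[ℓ]| ≤ C · D_K^{1/2+ε} · M^{-1}. -/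
open NumberField

/-- The order of the `ℓ`-torsion subgroup of the class group of a number field `K`. -/
noncomputable def clTor (K : Type*) [Field K] (ℓ : ℕ) : ℕ :=
  Nat.card {c : ClassGroup (𝓞 K) // c ^ ℓ = 1}


theorem ev_prod_filter {α ι M : Type*} [CommMonoid M] [Fintype ι] [DecidableEq ι] (f : α → ι)
    (h : α → M) (s : Multiset α) :
    ∏ i, ((s.filter (fun a => f a = i)).map h).prod = (s.map h).prod := by
  induction s using Multiset.induction_on with
  | empty => simp
  | cons a s ih =>
    have : ∀ i, (((a ::ₘ s).filter (fun a => f a = i)).map h).prod =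
        (if f a = i then h a else 1) * ((s.filter (fun a => f a = i)).map h).prod := by
      intro i
      by_cases hi : f a = i
      · simp [hi]
      · simp [hi]
    simp_rw [this]
    rw [Finset.prod_mul_distrib, ih, Finset.prod_ite_eq]
    simp

theorem ev_minFac {K : Type*} [Field K] [NumberField K] (P : Ideal (𝓞 K)) (hP : P.IsPrime)
    (h0 : P ≠ ⊥) : (Ideal.absNorm P).minFac.Prime ∧ ((Ideal.absNorm P).minFac : 𝓞 K) ∈ P ∧
      (Ideal.absNorm P).minFac ≤ Ideal.absNorm P := by
  have := hP.isMaximal h0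
  obtain ⟨q, k, hk, hqP, hq, h⟩ := Ideal.exists_prime_and_absNorm_eq_pow P
  rw [h, hq.pow_minFac hk.ne']
  exact ⟨hq, hqP, Nat.le_self_pow hk.ne' q⟩

theorem ev_primes_over {K : Type*} [Field K] [NumberField K] (q : ℕ) (hq : q.Prime)
    (S : Finset (Ideal (𝓞 K))) 
    (hS : ∀ P ∈ S, P.IsPrime ∧ P ≠ ⊥ ∧ (Ideal.absNorm P).minFac = q) :
    S.card ≤ Module.finrank ℚ K := by
  have h1 : ∏ P ∈ S, P ∣ Ideal.span {(q : 𝓞 K)} := by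
    apply Finset.prod_primes_dvd
    · intro P hP; exact Ideal.prime_of_isPrime (hS P hP).2.1 (hS P hP).1
    · intro P hP
      rw [Ideal.dvd_span_singleton]
      have := (ev_minFac P (hS P hP).1 (hS P hP).2.1).2.1
      rwa [(hS P hP).2.2] at this
  have h2 : Ideal.absNorm (∏ P ∈ S, P) ∣ Ideal.absNorm (Ideal.span {(q : 𝓞 K)}) := map_dvd _ h1
  rw [Ideal.absNorm_span_natCast, map_prod, RingOfIntegers.rank] at h2
  have h3 := Nat.le_of_dvd (pow_pos hq.pos _) h2
  have h4 : q ^ S.card ≤ ∏ P ∈ S, Ideal.absNorm P := by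
    apply Finset.pow_card_le_prod
    intro P hP
    rw [← (hS P hP).2.2]
    exact (ev_minFac P (hS P hP).1 (hS P hP).2.1).2.2
  exact (Nat.pow_le_pow_iff_right hq.one_lt).1 (h4.trans h3)

theorem ev_index {K : Type*} [Field K] [NumberField K] (n : ℕ) (hn : Module.finrank ℚ K = n) :
    ∃ (idx : Ideal (𝓞 K) → Fin n) (g : Fin n → ℕ → Ideal (𝓞 K)),
      ∀ P : Ideal (𝓞 K), P.IsPrime → P ≠ ⊥ → g (idx P) (Ideal.absNorm P).minFac = P := by
  classical
  have hn0 : 0 < n := hn ▸ Module.finrank_pos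
  have : Nonempty (Fin n) := ⟨⟨0, hn0⟩⟩
  let T : ℕ → Set (Ideal (𝓞 K)) := fun q => {P | P.IsPrime ∧ P ≠ ⊥ ∧ (Ideal.absNorm P).minFac = q}
  have key : ∀ q, ∃ f : Ideal (𝓞 K) → Fin n, Set.InjOn f (T q) := by
    intro q
    by_cases hq : q.Prime
    · have hfin : (T q).Finite := by
        by_contra hinf
        obtain ⟨S, hS, hc⟩ := Set.Infinite.exists_subset_card_eq hinf (n + 1)
        have := ev_primes_over q hq S (fun P hP => hS hP)
        omega
      have hle : hfin.toFinset.card ≤ Module.finrank ℚ K :=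
        ev_primes_over q hq _ (fun P hP => hfin.mem_toFinset.1 hP)
      obtain ⟨f, -, hf⟩ := Set.Finite.exists_injOn_of_encard_le (s := T q)
        (t := (Set.univ : Set (Fin n))) hfin (by
          rw [Set.encard_univ, ENat.card_eq_coe_fintype_card, Fintype.card_fin,
            hfin.encard_eq_coe_toFinset_card]
          exact_mod_cast hn ▸ hle)
      exact ⟨f, hf⟩
    · refine ⟨fun _ => ⟨0, hn0⟩, ?_⟩
      intro P hP
      exact absurd (hP.2.2 ▸ (ev_minFac P hP.1 hP.2.1).1) hq
  choose f hf using key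
  refine ⟨fun P => f (Ideal.absNorm P).minFac P, fun i q => Function.invFunOn (f q) (T q) i, ?_⟩
  intro P hP h0
  exact (hf _).leftInvOn_invFunOn (show P ∈ T _ from ⟨hP, h0, rfl⟩)

theorem ev_card_ideals (n : ℕ) (δ : ℝ) (hδ : 0 < δ) : ∃ C : ℝ, 0 < C ∧
    ∀ (K : Type) [Field K] [NumberField K], Module.finrank ℚ K = n →
    ∀ (S : Finset (Ideal (𝓞 K))) (B : ℝ), 0 ≤ B →
      (∀ I ∈ S, I ≠ ⊥ ∧ (Ideal.absNorm I : ℝ) ≤ B) → (S.card : ℝ) ≤ C * B ^ (1 + δ) := by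
  classical
  let g : ℕ → ℝ := fun m => 1 / (m : ℝ) ^ (1 + δ)
  have hg : Summable g := Real.summable_one_div_nat_rpow.2 (by linarith)
  have hg0 : ∀ m, 0 ≤ g m := fun m => by positivity
  have hG : 0 < ∑' m, g m := hg.tsum_pos hg0 1 (by simp [g])
  refine ⟨(∑' m, g m) ^ n, by positivity, ?_⟩
  intro K _ _ hn S B hB0 hS
  obtain ⟨idx, G, hIG⟩ := ev_index (K := K) n hn
  let q : Ideal (𝓞 K) → ℕ := fun P => (Ideal.absNorm P).minFac
  let F : Ideal (𝓞 K) → Multiset (Ideal (𝓞 K)) := UniqueFactorizationMonoid.normalizedFactors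
  have hF : ∀ I, ∀ P ∈ F I, P.IsPrime ∧ P ≠ ⊥ := by
    intro I P hP
    have := UniqueFactorizationMonoid.prime_of_normalized_factor P hP
    exact ⟨Ideal.isPrime_of_prime this, this.ne_zero⟩
  have hFprod : ∀ I, I ≠ ⊥ → (F I).prod = I := fun I hI =>
    associated_iff_eq.1 (UniqueFactorizationMonoid.prod_normalizedFactors hI)
  let ψ : Ideal (𝓞 K) → Fin n → ℕ := fun I i => (((F I).filter (fun P => idx P = i)).map q).prod
  have hψprod : ∀ I, ∏ i, ψ I i = ((F I).map q).prod := fun I => ev_prod_filter idx q (F I)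
  have hψpos : ∀ I i, 0 < ψ I i := by
    intro I i
    apply Nat.pos_of_ne_zero
    intro h
    have := Multiset.prod_eq_zero_iff.1 h
    simp only [Multiset.mem_map, Multiset.mem_filter] at this
    obtain ⟨P, ⟨hP, -⟩, h⟩ := this
    exact (ev_minFac P (hF I P hP).1 (hF I P hP).2).1.ne_zero h
  have hψle : ∀ I, I ≠ ⊥ → ∏ i, ψ I i ≤ Ideal.absNorm I := by
    intro I hI
    rw [hψprod]
    conv_rhs => rw [← hFprod I hI, map_multiset_prod]
    apply Multiset.prod_map_le_prod_map₀
    · intros; positivity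
    · intro P hP
      exact (ev_minFac P (hF I P hP).1 (hF I P hP).2).2.2
  have hinj : Set.InjOn ψ (S : Set (Ideal (𝓞 K))) := by
    have hleft : ∀ I, I ≠ ⊥ → 
        ∏ i, ((UniqueFactorizationMonoid.normalizedFactors (ψ I i)).map (G i)).prod = I := by
      intro I hI
      have h1 : ∀ i, UniqueFactorizationMonoid.normalizedFactors (ψ I i) =
          ((F I).filter (fun P => idx P = i)).map q := by
        intro i
        apply UniqueFactorizationMonoid.normalizedFactors_prod_of_prime
        intro p hp
        simp only [Multiset.mem_map, Multiset.mem_filter] at hp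
        obtain ⟨P, ⟨hP, -⟩, rfl⟩ := hp
        exact (ev_minFac P (hF I P hP).1 (hF I P hP).2).1.prime
      have h2 : ∀ i, ((UniqueFactorizationMonoid.normalizedFactors (ψ I i)).map (G i)).prod =
          (((F I).filter (fun P => idx P = i)).map id).prod := by
        intro i
        rw [h1, Multiset.map_map]
        congr 1
        apply Multiset.map_congr rfl
        intro P hP
        rw [Multiset.mem_filter] at hP
        have := hIG P (hF I P hP.1).1 (hF I P hP.1).2
        rw [hP.2] at this
        exact this
      simp_rw [h2]
      rw [ev_prod_filter, Multiset.map_id, hFprod I hI]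
    intro I hI J hJ hIJ
    rw [← hleft I (hS I hI).1, hIJ, hleft J (hS J hJ).1]
  have hterm : ∀ I ∈ S, (1 : ℝ) ≤ B ^ (1 + δ) * ∏ i, g (ψ I i) := by
    intro I hI
    have hle : ((∏ i, ψ I i : ℕ) : ℝ) ≤ B :=
      (by exact_mod_cast hψle I (hS I hI).1 : ((∏ i, ψ I i : ℕ) : ℝ) ≤ Ideal.absNorm I).trans
        (hS I hI).2
    have hpos : (0 : ℝ) < (∏ i, ψ I i : ℕ) := by
      exact_mod_cast Finset.prod_pos (fun i _ => hψpos I i)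
    have h1 : ∏ i, g (ψ I i) = 1 / ((∏ i, ψ I i : ℕ) : ℝ) ^ (1 + δ) := by
      simp only [g]
      rw [Finset.prod_div_distrib, Finset.prod_const_one, Nat.cast_prod,
        Real.finsetProd_rpow]
      intros; positivity
    rw [h1, mul_one_div, le_div_iff₀ (by positivity), one_mul]
    exact Real.rpow_le_rpow hpos.le hle (by linarith)
  have hB : 0 ≤ B ^ (1 + δ) := by
    positivity
  calc (S.card : ℝ) = ∑ I ∈ S, (1 : ℝ) := by simp
    _ ≤ ∑ I ∈ S, B ^ (1 + δ) * ∏ i, g (ψ I i) := Finset.sum_le_sum hterm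
    _ = B ^ (1 + δ) * ∑ m ∈ S.image ψ, ∏ i, g (m i) := by
        rw [Finset.sum_image hinj, Finset.mul_sum]
    _ ≤ B ^ (1 + δ) * ∑ m ∈ Fintype.piFinset (fun i : Fin n => S.image (fun I => ψ I i)), 
          ∏ i, g (m i) := by
        refine mul_le_mul_of_nonneg_left ?_ hB
        apply Finset.sum_le_sum_of_subset_of_nonneg
        · intro m hm
          obtain ⟨I, hI, rfl⟩ := Finset.mem_image.1 hm
          rw [Fintype.mem_piFinset]
          intro i
          exact Finset.mem_image_of_mem _ hI
        · intros; exact Finset.prod_nonneg (fun i _ => hg0 _)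
    _ = B ^ (1 + δ) * ∏ i : Fin n, ∑ m ∈ S.image (fun I => ψ I i), g m := by
        rw [Finset.prod_univ_sum]
    _ ≤ B ^ (1 + δ) * ∏ i : Fin n, ∑' m, g m := by
        gcongr
        exact hg.sum_le_tsum _ (fun _ _ => hg0 _)
    _ = _ := by simp [mul_comm]

theorem ev_exists_coprime {R : Type*} [CommRing R] [IsDedekindDomain R] [Module.Free ℤ R]
    [Module.Finite ℤ R] [CharZero R] (J : Ideal R) (hJ : J ≠ ⊥) (w : ℕ) (hw : w ≠ 0) :
    ∃ (α : R) (m : ℕ), α ∈ J ∧ α ≠ 0 ∧ (Algebra.norm ℤ α).natAbs = Ideal.absNorm J * m ∧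
      Nat.Coprime m w := by
  have hN : Ideal.absNorm J ≠ 0 := by rwa [Ne, Ideal.absNorm_eq_zero_iff]
  -- take a multiple of w * p with p prime to make sure y ≠ 0
  have hx : ((2 * w * Ideal.absNorm J : ℕ) : R) ∈ J := by
    rw [Nat.cast_mul]; exact J.mul_mem_left _ (Ideal.absNorm_mem J)
  have hx0 : ((2 * w * Ideal.absNorm J : ℕ) : R) ≠ 0 := by
    exact_mod_cast mul_ne_zero (mul_ne_zero two_ne_zero hw) hN
  obtain ⟨y, hy⟩ := IsDedekindDomain.exists_eq_span_pair hx hx0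
  have hyJ : y ∈ J := by rw [hy]; exact Ideal.subset_span (by simp)
  obtain ⟨A, hA⟩ : J ∣ Ideal.span {y} := by
    rw [Ideal.dvd_span_singleton]; exact hyJ
  obtain ⟨B, hB⟩ : J ∣ Ideal.span {((Ideal.absNorm J : ℕ) : R)} := by
    rw [Ideal.dvd_span_singleton]; exact Ideal.absNorm_mem J
  have hsup : J * (Ideal.span {((2 * w : ℕ) : R)} * B ⊔ A) = J * ⊤ := by
    rw [Ideal.mul_sup, ← hA, mul_left_comm, ← hB, Ideal.span_singleton_mul_span_singleton,
      ← Ideal.span_union, Ideal.mul_top]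
    conv_rhs => rw [hy]
    congr 1
    push_cast
    rw [Set.singleton_union]
  have hsup' := mul_left_cancel₀ (show J ≠ 0 from hJ) hsup
  have hco : Nat.Coprime (Ideal.absNorm A) (2 * w) := by
    rw [Nat.coprime_iff_gcd_eq_one]
    by_contra hne
    obtain ⟨q, hq, hqd⟩ := Nat.exists_prime_and_dvd hne
    obtain ⟨P, hPm, hPu, hPA⟩ := Ideal.exists_isMaximal_dvd_of_dvd_absNorm' hq A
      (hqd.trans (Nat.gcd_dvd_left _ _))
    apply hPm.ne_top
    rw [eq_top_iff, ← hsup', sup_le_iff]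
    refine ⟨Ideal.mul_le_left.trans ?_, Ideal.le_of_dvd hPA⟩
    rw [Ideal.span_singleton_le_iff_mem]
    have hqP : ((q : ℕ) : R) ∈ P := by
      have : (q : ℤ) ∈ P.under ℤ := by rw [hPu]; exact Ideal.mem_span_singleton_self _
      rw [Ideal.mem_comap] at this
      simpa using this
    obtain ⟨k, hk⟩ := hqd.trans (Nat.gcd_dvd_right _ _)
    rw [hk, Nat.cast_mul]
    exact P.mul_mem_right _ hqP
  refine ⟨y, Ideal.absNorm A, hyJ, ?_, ?_, hco.coprime_mul_left_right⟩
  · rintro rfl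
    have : A = ⊥ := by
      have h0 : J * A = ⊥ := by rw [← hA]; simp
      rcases Ideal.mul_eq_bot.1 h0 with h | h
      · exact absurd h hJ
      · exact h
    subst this
    simp at hco
  · rw [← Ideal.absNorm_span_singleton, hA, map_mul]

theorem ev_discr_bound (K : Type*) [Field K] [NumberField K] (n : ℕ)
    (hn : Module.finrank ℚ K = n) (z : K) (hz : IntermediateField.adjoin ℚ {z} = ⊤)
    (J : Ideal (𝓞 K)) (hJ : J ≠ ⊥)
    (hintegr : ∀ α ∈ J, ∀ k : ℕ, k < n → ∃ y : 𝓞 K, (y : K) = (α : K) * z ^ k)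
    (R : ℝ) (hR : 1 ≤ R) (hzR : ∀ w : InfinitePlace K, w z ≤ R) :
    ((NumberField.discr K).natAbs : ℝ) ≤
      (Ideal.absNorm J : ℝ) ^ 2 * (2 * R) ^ (n * n * 2) := by
  classical
  have hcard : Fintype.card (K →ₐ[ℚ] ℂ) = n := by rw [AlgHom.card, hn]
  let e : Fin n ≃ (K →ₐ[ℚ] ℂ) := (Fintype.equivFinOfCardEq hcard).symm
  let V : ℚ := Algebra.discr ℚ (fun k : Fin n => z ^ (k : ℕ))
  have hmat : Algebra.embeddingsMatrixReindex ℚ ℂ (fun k : Fin n => z ^ (k : ℕ)) e =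
      (Matrix.vandermonde fun i => e i z).transpose := by
    ext i j
    simp [Algebra.embeddingsMatrixReindex, Algebra.embeddingsMatrix, Matrix.vandermonde]
  have hV : (V : ℂ) = (∏ i : Fin n, ∏ j ∈ Finset.Ioi i, (e j z - e i z)) ^ 2 := by
    have := Algebra.discr_eq_det_embeddingsMatrixReindex_pow_two ℚ ℂ
      (fun k : Fin n => z ^ (k : ℕ)) e
    rw [hmat, Matrix.det_transpose, Matrix.det_vandermonde] at this
    simpa [V] using this
  have hV0 : V ≠ 0 := by
    intro h
    rw [h, Rat.cast_zero] at hV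
    have := pow_eq_zero_iff (two_ne_zero) |>.1 hV.symm
    simp only [Finset.prod_eq_zero_iff, Finset.mem_univ, true_and, Finset.mem_Ioi] at this
    obtain ⟨i, j, hij, h⟩ := this
    have h2 := (Field.primitive_element_iff_algHom_eq_of_eval ℚ ℂ
      (fun x => IsAlgClosed.splits _) z (e j)).1 hz (e i) (sub_eq_zero.1 h)
    exact hij.ne' (e.injective h2)
  have hVle : |(V : ℝ)| ≤ (2 * R) ^ (n * n * 2) := by
    have h1 : |(V : ℝ)| = ‖(V : ℂ)‖ := by
      rw [show (V : ℂ) = ((V : ℝ) : ℂ) by push_cast; rfl, Complex.norm_real, Real.norm_eq_abs]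
    have hb : ∀ i, ‖e i z‖ ≤ R := fun i => by
      simpa using hzR (InfinitePlace.mk (e i).toRingHom)
    rw [h1, hV, norm_pow, pow_mul]
    gcongr
    rw [norm_prod, pow_mul]
    calc ∏ i : Fin n, ‖∏ j ∈ Finset.Ioi i, (e j z - e i z)‖ 
        ≤ ∏ i : Fin n, (2 * R) ^ n := by
          apply Finset.prod_le_prod
          · intros; positivity
          intro i _
          rw [norm_prod]
          calc ∏ j ∈ Finset.Ioi i, ‖e j z - e i z‖ ≤ ∏ j ∈ Finset.Ioi i, (2 * R) := by
                apply Finset.prod_le_prod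
                · intros; positivity
                intro j _
                refine (norm_sub_le _ _).trans ?_
                linarith [hb i, hb j]
            _ ≤ (2 * R) ^ n := by
                rw [Finset.prod_const]
                apply pow_le_pow_right₀ (by linarith)
                exact (Finset.card_le_univ _).trans (by simp)
      _ = _ := by simp
  -- integrality
  have hkey : ∀ α ∈ J, ∃ m : ℤ, V * ((Algebra.norm ℤ α : ℤ) : ℚ) ^ 2 = m * (discr K : ℚ) := by
    intro α hα
    choose y hy using fun k : Fin n => hintegr α hα k k.2
    have hc2 : Fintype.card (Module.Free.ChooseBasisIndex ℤ (𝓞 K)) = n := by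
      rw [← Module.finrank_eq_card_chooseBasisIndex, RingOfIntegers.rank, hn]
    let f := Fintype.equivFinOfCardEq hc2
    let b := (integralBasis K).reindex f
    have hbd : Algebra.discr ℚ b = (discr K : ℚ) := by
      rw [coe_discr, ← Algebra.discr_reindex ℚ (integralBasis K) f]
      congr 1
      ext i
      simp [b]
    let P : Matrix (Fin n) (Fin n) ℤ := fun i j => (RingOfIntegers.basis K).repr (y j) (f.symm i)
    have hP : b.toMatrix (fun k => (y k : K)) = P.map (Int.castRingHom ℚ) := by
      ext i j
      rw [Matrix.map_apply]
      simp [b, P, Module.Basis.toMatrix_apply]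
    have h1 := Algebra.discr_of_matrix_vecMul (b : Fin n → K) (b.toMatrix (fun k => (y k : K)))
    rw [Module.Basis.toMatrix_map_vecMul, hbd, hP, ← RingHom.mapMatrix_apply, ← RingHom.map_det] at h1
    refine ⟨P.det ^ 2, ?_⟩
    rw [Int.cast_pow, show ((P.det : ℤ) : ℚ) = (Int.castRingHom ℚ) P.det from rfl, ← h1]
    have hinj : Function.Injective (algebraMap ℚ ℂ) := (algebraMap ℚ ℂ).injective
    apply hinj
    rw [map_mul, map_pow, Algebra.discr_eq_det_embeddingsMatrixReindex_pow_two ℚ ℂ _ e,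
      Algebra.discr_eq_det_embeddingsMatrixReindex_pow_two ℚ ℂ _ e]
    have hm2 : Algebra.embeddingsMatrixReindex ℚ ℂ (fun k : Fin n => (y k : K)) e =
      Matrix.of (fun i j => (e j (α : K)) * 
        Algebra.embeddingsMatrixReindex ℚ ℂ (fun k : Fin n => z ^ (k : ℕ)) e i j) := by
      ext i j
      simp [Algebra.embeddingsMatrixReindex, Algebra.embeddingsMatrix, hy]
    rw [hm2, Matrix.det_mul_row (fun j => e j (α : K))]
    have hnorm : algebraMap ℚ ℂ ((Algebra.norm ℤ α : ℤ) : ℚ) = ∏ i, e i (α : K) := by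
      rw [Algebra.coe_norm_int, Algebra.norm_eq_prod_embeddings ℚ ℂ]
      exact (Equiv.prod_comp e (fun σ => σ (α : K))).symm
    rw [hnorm]
    ring
  let r : ℚ := V / (discr K : ℚ)
  have hD0 : (discr K : ℚ) ≠ 0 := by exact_mod_cast discr_ne_zero K
  have hr0 : r ≠ 0 := div_ne_zero hV0 hD0
  obtain ⟨α, m, hαJ, hα0, hαN, hcop⟩ := ev_exists_coprime J hJ r.den r.den_nz
  obtain ⟨k, hk⟩ := hkey α hαJ
  have hk' : r * ((Algebra.norm ℤ α : ℤ) : ℚ) ^ 2 = k := by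
    simp only [r]; field_simp; linarith
  have hdvd : r.den ∣ (Ideal.absNorm J) ^ 2 := by
    have h1 : (r.num * (Algebra.norm ℤ α) ^ 2 : ℤ) = k * r.den := by
      rw [← Rat.num_div_den r] at hk'
      have : (r.den : ℚ) ≠ 0 := by exact_mod_cast r.den_nz
      field_simp at hk'
      rw [mul_comm k]
      exact_mod_cast hk'
    have h2 : r.den ∣ r.num.natAbs * (Ideal.absNorm J * m) ^ 2 := by
      rw [← hαN]
      have : (r.num * (Algebra.norm ℤ α) ^ 2 : ℤ).natAbs = (k * r.den).natAbs := by rw [h1]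
      rw [Int.natAbs_mul, Int.natAbs_pow, Int.natAbs_mul, Int.natAbs_natCast] at this
      exact Dvd.intro_left _ this.symm
    have h3 := (Nat.Coprime.dvd_of_dvd_mul_left r.reduced.symm h2)
    rw [mul_pow] at h3
    exact (Nat.Coprime.pow_left 2 hcop).symm.dvd_of_dvd_mul_right h3
  have hge : (1 : ℚ) ≤ |r| * (Ideal.absNorm J : ℚ) ^ 2 := by
    obtain ⟨c, hc⟩ := hdvd
    have hJ0 : Ideal.absNorm J ≠ 0 := by rwa [Ne, Ideal.absNorm_eq_zero_iff]
    have hc0 : c ≠ 0 := by rintro rfl; simp [hJ0] at hc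
    have hd : (r.den : ℚ) ≠ 0 := by exact_mod_cast r.den_nz
    have : |r| * (Ideal.absNorm J : ℚ) ^ 2 = (r.num.natAbs * c : ℕ) := by
      have hc' : (Ideal.absNorm J : ℚ) ^ 2 = r.den * c := by exact_mod_cast hc
      have hrr : |r| = |(r.num : ℚ)| / r.den := by
        conv_lhs => rw [← Rat.num_div_den r]
        rw [abs_div, Nat.abs_cast]
      rw [hc', hrr]
      push_cast [Nat.cast_natAbs]
      field_simp
    rw [this]
    have : r.num.natAbs * c ≠ 0 := mul_ne_zero (by simpa using hr0) hc0
    exact_mod_cast Nat.one_le_iff_ne_zero.2 this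
  have hfin : |(discr K : ℚ)| ≤ |V| * (Ideal.absNorm J : ℚ) ^ 2 := by
    have hpos : 0 < |(discr K : ℚ)| := abs_pos.2 hD0
    simp only [r, abs_div] at hge
    rw [div_mul_eq_mul_div, le_div_iff₀ hpos] at hge
    linarith
  have hfin' : |(discr K : ℝ)| ≤ |(V : ℝ)| * (Ideal.absNorm J : ℝ) ^ 2 := by exact_mod_cast hfin
  calc ((NumberField.discr K).natAbs : ℝ) = |(discr K : ℝ)| := by simp [Nat.cast_natAbs]
    _ ≤ _ := hfin'
    _ ≤ _ := by rw [mul_comm]; gcongr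

theorem ev_generates (K : Type*) [Field K] [NumberField K] (p p' : Ideal (𝓞 K))
    (hp : p.IsPrime) (hp' : p'.IsPrime) (hp0 : p ≠ ⊥) (hp0' : p' ≠ ⊥) (hne : p ≠ p') (ℓ : ℕ)
    (hℓ : ℓ ≠ 0)
    (hur : ∀ q : ℕ, q.Prime → (q : 𝓞 K) ∈ p → ¬ p ^ 2 ∣ Ideal.span {(q : 𝓞 K)})
    (hext : ¬ ∃ K₀ : IntermediateField ℚ K, K₀ ≠ ⊤ ∧ ∃ 𝔭₀ : Ideal (𝓞 K₀),
        𝔭₀.IsPrime ∧ Ideal.map (algebraMap (𝓞 K₀) (𝓞 K)) 𝔭₀ = p)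
    (a b : 𝓞 K) (hb : b ≠ 0)
    (hab : Ideal.span {a} * p' ^ ℓ = Ideal.span {b} * p ^ ℓ) (z : K)
    (hz : z = (a : K) / b) : IntermediateField.adjoin ℚ {z} = ⊤ := by
  by_contra htop
  set K₀ := IntermediateField.adjoin ℚ {z} with hK₀
  apply hext
  refine ⟨K₀, htop, p.comap (algebraMap (𝓞 K₀) (𝓞 K)), Ideal.comap_isPrime _ _, ?_⟩
  have hz0 : z ∈ K₀ := IntermediateField.mem_adjoin_simple_self ℚ z
  obtain ⟨a₀, b₀, hb₀, h₀⟩ := IsFractionRing.div_surjective (A := 𝓞 K₀) (⟨z, hz0⟩ : K₀)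
  have hb₀' : b₀ ≠ 0 := nonZeroDivisors.ne_zero hb₀
  set φ := algebraMap (𝓞 K₀) (𝓞 K)
  have hφ : Function.Injective φ := FaithfulSMul.algebraMap_injective _ _
  have hφc : ∀ x : 𝓞 K₀, ((φ x : 𝓞 K) : K) = ((x : K₀) : K) := fun x => rfl
  have hrel : φ a₀ * b = a * φ b₀ := by
    apply RingOfIntegers.coe_injective
    have h1 : ((a₀ : K₀) : K) / ((b₀ : K₀) : K) = z := by
      have := congrArg (fun x : K₀ => (x : K)) h₀
      simpa using this
    have hbK : (b : K) ≠ 0 := by simpa using hb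
    have hb₀K : ((b₀ : K₀) : K) ≠ 0 := by simpa using hb₀'
    rw [hz] at h1
    rw [map_mul, map_mul]
    change ((a₀ : K₀) : K) * b = a * ((b₀ : K₀) : K)
    field_simp at h1
    linear_combination h1
  have hb' : Ideal.span {b} ≠ 0 := by simpa using hb
  have hrel2 : Ideal.map φ (Ideal.span {a₀}) * p' ^ ℓ = Ideal.map φ (Ideal.span {b₀}) * p ^ ℓ := by
    rw [Ideal.map_span, Ideal.map_span, Set.image_singleton, Set.image_singleton]
    apply mul_left_cancel₀ hb'
    rw [← mul_assoc, Ideal.span_singleton_mul_span_singleton, mul_comm b, hrel,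
      ← Ideal.span_singleton_mul_span_singleton, mul_right_comm, hab]
    ring
  obtain ⟨A, hA⟩ : Ideal.span {a₀} ⊔ Ideal.span {b₀} ∣ Ideal.span {a₀} :=
    Ideal.dvd_iff_le.2 le_sup_left
  obtain ⟨B, hB⟩ : Ideal.span {a₀} ⊔ Ideal.span {b₀} ∣ Ideal.span {b₀} :=
    Ideal.dvd_iff_le.2 le_sup_right
  set G := Ideal.span {a₀} ⊔ Ideal.span {b₀} with hG
  have hG0 : G ≠ 0 := by
    intro h
    have : b₀ ∈ G := (le_sup_right : _ ≤ G) (Ideal.mem_span_singleton_self b₀)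
    rw [h] at this
    exact hb₀' (by simpa using this)
  have hGK : Ideal.map φ G ≠ 0 := by
    rw [Ne, Ideal.zero_eq_bot, Ideal.map_eq_bot_iff_of_injective hφ]; exact hG0
  have hAB : A ⊔ B = ⊤ := by
    apply mul_left_cancel₀ hG0
    rw [Ideal.mul_sup, ← hA, ← hB, Ideal.mul_top]
  have hrel3 : Ideal.map φ A * p' ^ ℓ = Ideal.map φ B * p ^ ℓ := by
    rw [hA, hB, Ideal.map_mul, Ideal.map_mul, mul_assoc, mul_assoc] at hrel2
    exact mul_left_cancel₀ hGK hrel2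
  have hcop1 : IsCoprime (Ideal.map φ A) (Ideal.map φ B) := by
    rw [Ideal.isCoprime_iff_sup_eq, ← Ideal.map_sup, hAB, Ideal.map_top]
  have hmax := hp.isMaximal hp0
  have hmax' := hp'.isMaximal hp0'
  have hcop2 : IsCoprime (p ^ ℓ) (p' ^ ℓ) := by
    apply IsCoprime.pow
    rw [Ideal.isCoprime_iff_sup_eq]
    exact hmax.coprime_of_ne hmax' hne
  have hpA : Ideal.map φ A = p ^ ℓ := by
    apply dvd_antisymm
    · exact hcop1.dvd_of_dvd_mul_left (hrel3 ▸ dvd_mul_right _ _)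
    · exact hcop2.dvd_of_dvd_mul_right (hrel3 ▸ dvd_mul_left _ _)
  set P₀ := p.comap φ with hP₀
  have hle : A ≤ P₀ := by
    rw [hP₀, ← Ideal.map_le_iff_le_comap, hpA]; exact Ideal.pow_le_self hℓ
  have hdvd : Ideal.map φ P₀ ∣ p ^ ℓ := by
    rw [Ideal.dvd_iff_le, ← hpA]; exact Ideal.map_mono hle
  have hprime : Prime p := Ideal.prime_of_isPrime hp0 hp
  obtain ⟨i, -, hi⟩ := (dvd_prime_pow hprime ℓ).1 hdvd
  rw [associated_iff_eq] at hi
  have hP₀p : Ideal.map φ P₀ ≤ p := Ideal.map_comap_le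
  have hi0 : i ≠ 0 := by
    rintro rfl
    rw [hi, pow_zero, Ideal.one_eq_top, top_le_iff] at hP₀p
    exact hp.ne_top hP₀p
  obtain ⟨q, -, -, hqp, hq, -⟩ := Ideal.exists_prime_and_absNorm_eq_pow p
  have hi2 : i < 2 := by
    by_contra h
    apply hur q hq hqp
    refine (pow_dvd_pow p (not_lt.1 h)).trans ?_
    rw [← hi, Ideal.dvd_span_singleton]
    have : (q : 𝓞 K₀) ∈ P₀ := by
      rw [hP₀, Ideal.mem_comap, map_natCast]; exact hqp
    have := Ideal.mem_map_of_mem φ this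
    rwa [map_natCast] at this
  have : i = 1 := by omega
  rw [hi, this, pow_one]

theorem ev_minkowski (K : Type*) [Field K] [NumberField K] (n : ℕ)
    (hn : Module.finrank ℚ K = n) (L p : Ideal (𝓞 K)) (hL : L ≠ ⊥) (hp : p ≠ ⊥) (ℓ : ℕ)
    (hℓ : ℓ ≠ 0) (γ : 𝓞 K) (hγ : γ ≠ 0) (hLγ : L ^ ℓ = Ideal.span {γ}) (T : ℝ) (hT : 1 ≤ T)
    (hTn : 2 ^ n * (Ideal.absNorm p : ℝ) * Real.sqrt ((discr K).natAbs : ℝ) < T ^ n) :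
    ∃ (x : 𝓞 K) (a : Ideal (𝓞 K)), x ≠ 0 ∧ a ≠ ⊥ ∧ Ideal.span {x} = L * p * a ∧
      (Ideal.absNorm a : ℝ) * (Ideal.absNorm p : ℝ) ≤ T ^ n ∧
      ∀ w : InfinitePlace K, w (x : K) / (w (γ : K)) ^ (1 / (ℓ : ℝ)) ≤ T ∧
        (T ^ n)⁻¹ ≤ w (x : K) / (w (γ : K)) ^ (1 / (ℓ : ℝ)) := by
  classical
  have hT0 : 0 < T := by linarith
  have hγK : (γ : K) ≠ 0 := by simpa using hγ
  have hwγ : ∀ w : InfinitePlace K, 0 < w (γ : K) := fun w => InfinitePlace.pos_iff.2 hγK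
  have hNL : 0 < Ideal.absNorm L := Nat.pos_of_ne_zero (by rwa [Ne, Ideal.absNorm_eq_zero_iff])
  have hNp : 0 < Ideal.absNorm p := Nat.pos_of_ne_zero (by rwa [Ne, Ideal.absNorm_eq_zero_iff])
  have habs : ∀ y : 𝓞 K, ∏ w : InfinitePlace K, w (y : K) ^ w.mult =
      (Ideal.absNorm (Ideal.span {y}) : ℝ) := by
    intro y
    rw [InfinitePlace.prod_eq_abs_norm, Ideal.absNorm_span_singleton, ← Algebra.coe_norm_int,
      ← Int.cast_abs, Nat.cast_natAbs]
    simp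
  have hγprod : ∏ w : InfinitePlace K, ((w (γ : K)) ^ (1 / (ℓ : ℝ))) ^ w.mult =
      (Ideal.absNorm L : ℝ) := by
    have h1 : ∀ w : InfinitePlace K, ((w (γ : K)) ^ (1 / (ℓ : ℝ))) ^ w.mult =
        ((w (γ : K)) ^ w.mult) ^ (1 / (ℓ : ℝ)) := by
      intro w
      rw [← Real.rpow_natCast, ← Real.rpow_natCast, ← Real.rpow_mul (hwγ w).le,
        ← Real.rpow_mul (hwγ w).le, mul_comm]
    simp_rw [h1]
    rw [Real.finsetProd_rpow _ _ (fun w _ => by have := hwγ w; positivity), habs, ← hLγ, map_pow,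
      Nat.cast_pow, one_div, Real.pow_rpow_inv_natCast (by positivity) hℓ]
  have hTprod : ∏ w : InfinitePlace K, T ^ w.mult = T ^ n := by
    rw [Finset.prod_pow_eq_pow_sum, InfinitePlace.sum_mult_eq, hn]
  let f : InfinitePlace K → NNReal := fun w =>
    ⟨T * (w (γ : K)) ^ (1 / (ℓ : ℝ)), by have := hwγ w; positivity⟩
  have hf : (∏ w, (f w) ^ w.mult : NNReal) = (T ^ n * Ideal.absNorm L : ℝ) := by
    push_cast
    change ∏ w : InfinitePlace K, (T * (w (γ : K)) ^ (1 / (ℓ : ℝ))) ^ w.mult = _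
    simp_rw [mul_pow]
    rw [Finset.prod_mul_distrib, hTprod, hγprod]
  have hLp : L * p ≠ ⊥ := by
    intro h; rcases Ideal.mul_eq_bot.1 h with h | h
    · exact hL h
    · exact hp h
  let I : (FractionalIdeal (nonZeroDivisors (𝓞 K)) K)ˣ :=
    Units.mk0 ((L * p : Ideal (𝓞 K)) : FractionalIdeal (nonZeroDivisors (𝓞 K)) K)
      (by rwa [Ne, FractionalIdeal.coeIdeal_eq_zero])
  have hvol : mixedEmbedding.minkowskiBound K I <
      MeasureTheory.volume (mixedEmbedding.convexBodyLT K f) := by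
    rw [mixedEmbedding.convexBodyLT_volume, mixedEmbedding.minkowskiBound,
      mixedEmbedding.volume_fundamentalDomain_fractionalIdealLatticeBasis,
      mixedEmbedding.volume_fundamentalDomain_latticeBasis, mixedEmbedding.finrank, hn]
    have hI : (FractionalIdeal.absNorm (I : FractionalIdeal (nonZeroDivisors (𝓞 K)) K) : ℚ) =
        (Ideal.absNorm L * Ideal.absNorm p : ℕ) := by
      simp only [I, Units.val_mk0]
      rw [FractionalIdeal.coeIdeal_absNorm, map_mul]
    change ENNReal.ofReal ((FractionalIdeal.absNorm (I : FractionalIdeal (nonZeroDivisors (𝓞 K)) K) : ℚ) : ℝ) * _ * _ < _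
    rw [hI]
    calc _ ≤ ENNReal.ofReal (((Ideal.absNorm L * Ideal.absNorm p : ℕ) : ℚ) : ℝ) *
            (1 * (NNReal.sqrt ‖discr K‖₊ : ENNReal)) * 2 ^ n := by
          gcongr
          exact pow_le_one₀ (by simp) (by simp)
      _ = ENNReal.ofReal ((2 ^ n * (Ideal.absNorm p : ℝ) * Real.sqrt ((discr K).natAbs : ℝ)) *
            Ideal.absNorm L) := by
          rw [one_mul, show (NNReal.sqrt ‖discr K‖₊ : ENNReal) =
            ENNReal.ofReal (Real.sqrt ((discr K).natAbs : ℝ)) by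
              rw [← ENNReal.ofReal_coe_nnreal, Real.coe_sqrt]
              congr 2
              simp [Nat.cast_natAbs, Int.norm_eq_abs],
            show (2 : ENNReal) ^ n = ENNReal.ofReal (2 ^ n) by
              rw [ENNReal.ofReal_pow (by norm_num)]; simp,
            ← ENNReal.ofReal_mul (by positivity), ← ENNReal.ofReal_mul (by positivity)]
          congr 1
          push_cast
          ring
      _ < ENNReal.ofReal (T ^ n * Ideal.absNorm L) := by
          rw [ENNReal.ofReal_lt_ofReal_iff (by positivity)]
          gcongr
      _ = 1 * ((∏ w, (f w) ^ w.mult : NNReal) : ENNReal) := by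
          rw [← hf, ENNReal.ofReal_coe_nnreal, one_mul]
      _ ≤ _ := by
          rw [ENNReal.ofNNReal_finsetProd]
          simp_rw [ENNReal.coe_pow]
          gcongr
          exact ENNReal.one_le_coe_iff.2 (mixedEmbedding.one_le_convexBodyLTFactor K)
  obtain ⟨x', hx'I, hx'0, hx'⟩ := mixedEmbedding.exists_ne_zero_mem_ideal_lt K I hvol
  obtain ⟨x, hxI, rfl⟩ : ∃ x ∈ L * p, algebraMap (𝓞 K) K x = x' := by
    simp only [I, Units.val_mk0] at hx'I
    exact (FractionalIdeal.mem_coeIdeal _).1 hx'I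
  have hx0 : x ≠ 0 := by rintro rfl; simp at hx'0
  obtain ⟨a, ha⟩ : L * p ∣ Ideal.span {x} := by rwa [Ideal.dvd_span_singleton]
  have ha0 : a ≠ ⊥ := by
    rintro rfl
    apply hx0
    simpa using ha
  have hNa : 0 < Ideal.absNorm a := Nat.pos_of_ne_zero (by rwa [Ne, Ideal.absNorm_eq_zero_iff])
  let t : InfinitePlace K → ℝ := fun w => w (x : K) / (w (γ : K)) ^ (1 / (ℓ : ℝ))
  have ht0 : ∀ w, 0 < t w := fun w => by
    have := hwγ w
    have : 0 < w (x : K) := InfinitePlace.pos_iff.2 hx'0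
    positivity
  have htT : ∀ w, t w ≤ T := fun w => by
    have := hwγ w
    rw [div_le_iff₀ (by positivity)]
    exact (hx' w).le
  have htprod : ∏ w, t w ^ w.mult = (Ideal.absNorm a : ℝ) * Ideal.absNorm p := by
    simp only [t, div_pow]
    rw [Finset.prod_div_distrib, hγprod, habs, ha, map_mul, map_mul]
    push_cast
    field_simp
  refine ⟨x, a, hx0, ha0, ha, ?_, fun w => ⟨htT w, ?_⟩⟩
  · rw [← htprod, ← hTprod]
    apply Finset.prod_le_prod
    · intro w _; exact (pow_pos (ht0 w) _).le
    · intro w _; exact pow_le_pow_left₀ (ht0 w).le (htT w) _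
  · change (T ^ n)⁻¹ ≤ t w
    by_contra hlt
    push Not at hlt
    have hTn1 : 1 ≤ T ^ n := one_le_pow₀ hT
    have h1 : t w ^ w.mult ≤ t w := by
      apply pow_le_of_le_one (ht0 w).le
      · exact hlt.le.trans (inv_le_one_of_one_le₀ hTn1)
      · exact InfinitePlace.mult_ne_zero
    have h2 : ∏ w' ∈ Finset.univ.erase w, t w' ^ w'.mult ≤ T ^ n := by
      rw [← hTprod, ← Finset.mul_prod_erase Finset.univ (fun w => T ^ w.mult) (Finset.mem_univ w)]
      calc _ ≤ ∏ w' ∈ Finset.univ.erase w, T ^ w'.mult := by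
            apply Finset.prod_le_prod
            · intro w _; exact (pow_pos (ht0 w) _).le
            · intro w _; exact pow_le_pow_left₀ (ht0 w).le (htT w) _
        _ ≤ _ := by
            apply le_mul_of_one_le_left
            · positivity
            · exact one_le_pow₀ hT
    have h3 : (1 : ℝ) ≤ ∏ w, t w ^ w.mult := by
      rw [htprod]
      have : 1 ≤ Ideal.absNorm a * Ideal.absNorm p := Nat.mul_pos hNa hNp
      exact_mod_cast this
    rw [← Finset.mul_prod_erase Finset.univ (fun w => t w ^ w.mult) (Finset.mem_univ w)] at h3
    have h4 : t w ^ w.mult * ∏ w' ∈ Finset.univ.erase w, t w' ^ w'.mult ≤ t w * T ^ n := by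
      apply mul_le_mul h1 h2
      · exact Finset.prod_nonneg (fun w _ => (pow_pos (ht0 w) _).le)
      · exact (ht0 w).le
    have h5 : t w * T ^ n < 1 := by
      have := mul_lt_mul_of_pos_right hlt (show 0 < T ^ n by positivity)
      rwa [inv_mul_cancel₀ (by positivity)] at this
    linarith

theorem ev_collision (K : Type*) [Field K] [NumberField K] (n : ℕ) (hn0 : 1 ≤ n)
    (hn : Module.finrank ℚ K = n) (p p' : Ideal (𝓞 K))
    (hp : p.IsPrime) (hp' : p'.IsPrime) (hp0 : p ≠ ⊥) (hp0' : p' ≠ ⊥) (hne : p ≠ p') (ℓ : ℕ)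
    (hℓ : ℓ ≠ 0)
    (hur : ∀ q : ℕ, q.Prime → (q : 𝓞 K) ∈ p → ¬ p ^ 2 ∣ Ideal.span {(q : 𝓞 K)})
    (hext : ¬ ∃ K₀ : IntermediateField ℚ K, K₀ ≠ ⊤ ∧ ∃ 𝔭₀ : Ideal (𝓞 K₀),
        𝔭₀.IsPrime ∧ Ideal.map (algebraMap (𝓞 K₀) (𝓞 K)) 𝔭₀ = p)
    (L L' a : Ideal (𝓞 K)) (γ γ' x x' : 𝓞 K) (hγ : γ ≠ 0) (hγ' : γ' ≠ 0)
    (hx : x ≠ 0) (hx' : x' ≠ 0) (hL : L ^ ℓ = Ideal.span {γ}) (hL' : L' ^ ℓ = Ideal.span {γ'})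
    (hxa : Ideal.span {x} = L * p * a) (hxa' : Ideal.span {x'} = L' * p' * a)
    (hbox : ∀ w : InfinitePlace K, ⌊Real.log (w (x : K) / (w (γ : K)) ^ (1 / (ℓ : ℝ)))⌋ =
      ⌊Real.log (w (x' : K) / (w (γ' : K)) ^ (1 / (ℓ : ℝ)))⌋) :
    ((NumberField.discr K).natAbs : ℝ) ≤
      (Ideal.absNorm p' : ℝ) ^ (2 * ℓ * (n - 1)) * (2 * Real.exp ℓ) ^ (n * n * 2) := by
  set A : 𝓞 K := x ^ ℓ * γ' with hA
  set B : 𝓞 K := x' ^ ℓ * γ with hB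
  have hB0 : B ≠ 0 := mul_ne_zero (pow_ne_zero _ hx') hγ
  have hAB : Ideal.span {A} * p' ^ ℓ = Ideal.span {B} * p ^ ℓ := by
    rw [hA, hB, ← Ideal.span_singleton_mul_span_singleton,
      ← Ideal.span_singleton_mul_span_singleton, ← Ideal.span_singleton_pow,
      ← Ideal.span_singleton_pow, hxa, hxa', ← hL, ← hL']
    ring
  have hgen := ev_generates K p p' hp hp' hp0 hp0' hne ℓ hℓ hur hext A B hB0 hAB
    ((A : K) / B) rfl
  have hJ : p' ^ (ℓ * (n - 1)) ≠ ⊥ := pow_ne_zero _ hp0'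
  have hBK : (B : K) ≠ 0 := by simpa using hB0
  have h := ev_discr_bound K n hn ((A : K) / B) hgen (p' ^ (ℓ * (n - 1))) hJ ?_ (Real.exp ℓ)
    (Real.one_le_exp (by positivity)) ?_
  · rw [map_pow] at h
    refine h.trans (le_of_eq ?_)
    push_cast
    ring
  · intro α hα k hk
    have hdvd : B ^ k ∣ α * A ^ k := by
      rw [← Ideal.span_singleton_le_span_singleton, ← Ideal.dvd_iff_le]
      rw [← Ideal.span_singleton_mul_span_singleton, ← Ideal.span_singleton_pow,
        ← Ideal.span_singleton_pow]
      obtain ⟨c, hc⟩ : p' ^ (ℓ * k) ∣ Ideal.span {α} := by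
        refine (pow_dvd_pow p' (Nat.mul_le_mul_left ℓ (show k ≤ n - 1 by omega))).trans ?_
        rwa [Ideal.dvd_span_singleton]
      refine ⟨c * p ^ (ℓ * k), ?_⟩
      rw [hc, pow_mul, pow_mul]
      calc _ = c * (Ideal.span {A} * p' ^ ℓ) ^ k := by ring
        _ = _ := by rw [hAB]; ring
    obtain ⟨y, hy⟩ := hdvd
    refine ⟨y, ?_⟩
    have : (α : K) * (A : K) ^ k = (B : K) ^ k * y := by
      have := congrArg (fun u : 𝓞 K => (u : K)) hy
      simpa using this
    rw [div_pow]
    field_simp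
    rw [this]; ring
  · intro w
    have hpos : ∀ u : 𝓞 K, u ≠ 0 → 0 < w (u : K) := fun u hu =>
      InfinitePlace.pos_iff.2 (by simpa using hu)
    have h1 := hpos x hx
    have h2 := hpos x' hx'
    have h3 := hpos γ hγ
    have h4 := hpos γ' hγ'
    set t := w (x : K) / (w (γ : K)) ^ (1 / (ℓ : ℝ)) with ht
    set t' := w (x' : K) / (w (γ' : K)) ^ (1 / (ℓ : ℝ)) with ht'
    have ht0 : 0 < t := by positivity
    have ht0' : 0 < t' := by positivity
    have hlog : Real.log t ≤ Real.log t' + 1 := by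
      have e1 := Int.lt_floor_add_one (Real.log t)
      have e2 := Int.floor_le (Real.log t')
      rw [hbox w] at e1
      linarith
    have hte : t ≤ t' * Real.exp 1 := by
      rw [← Real.exp_log ht0, ← Real.exp_log ht0', ← Real.exp_add]
      exact Real.exp_le_exp.2 hlog
    have hpw : ∀ u : ℝ, 0 < u → (u ^ (1 / (ℓ : ℝ))) ^ ℓ = u := fun u hu => by
      rw [one_div, Real.rpow_inv_natCast_pow hu.le hℓ]
    have hz : w ((A : K) / B) = t ^ ℓ / t' ^ ℓ := by
      rw [ht, ht', div_pow, div_pow, hpw _ h3, hpw _ h4, hA, hB]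
      simp only [map_mul, map_pow, map_div₀]
      field_simp
    rw [hz, div_le_iff₀ (by positivity)]
    calc t ^ ℓ ≤ (t' * Real.exp 1) ^ ℓ := by gcongr
      _ = _ := by rw [mul_pow, ← Real.exp_nat_mul, mul_one, mul_comm]

theorem ev_data (K : Type*) [Field K] [NumberField K] (n : ℕ) (hn0 : 1 ≤ n)
    (hn : Module.finrank ℚ K = n) (ℓ : ℕ) (hℓ : ℓ ≠ 0) (M : ℕ) (p : Fin M → Ideal (𝓞 K))
    (hinj : Function.Injective p) (hp : ∀ j, (p j).IsPrime)
    (hur : ∀ j, ∀ q : ℕ, q.Prime → (q : 𝓞 K) ∈ p j → ¬ (p j) ^ 2 ∣ Ideal.span {(q : 𝓞 K)})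
    (hext : ∀ j, ¬ ∃ K₀ : IntermediateField ℚ K, K₀ ≠ ⊤ ∧ ∃ 𝔭₀ : Ideal (𝓞 K₀),
        𝔭₀.IsPrime ∧ Ideal.map (algebraMap (𝓞 K₀) (𝓞 K)) 𝔭₀ = p j)
    (hp0 : ∀ j, p j ≠ ⊥) :
    ∃ (a : {c : ClassGroup (𝓞 K) // c ^ ℓ = 1} × Fin M → Ideal (𝓞 K))
      (β : {c : ClassGroup (𝓞 K) // c ^ ℓ = 1} × Fin M → InfinitePlace K → ℤ),
      (∀ u, a u ≠ ⊥ ∧ (Ideal.absNorm (a u) : ℝ) ≤ 4 ^ n * √((discr K).natAbs : ℝ)) ∧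
      (∀ u w, |(β u w : ℝ)| ≤ Real.log (4 ^ n * (Ideal.absNorm (p u.2) : ℝ) *
        √((discr K).natAbs : ℝ)) + 1) ∧
      (∀ u v, a u = a v → β u = β v → u.2 = v.2 → u = v) ∧
      (∀ u v, a u = a v → β u = β v → u.2 ≠ v.2 → ((NumberField.discr K).natAbs : ℝ) ≤
        (Ideal.absNorm (p v.2) : ℝ) ^ (2 * ℓ * (n - 1)) * (2 * Real.exp ℓ) ^ (n * n * 2)) := by
  classical
  have hcl : ∀ c : {c : ClassGroup (𝓞 K) // c ^ ℓ = 1}, ∃ (L : Ideal (𝓞 K)) (γ : 𝓞 K)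
      (hL : L ∈ nonZeroDivisors (Ideal (𝓞 K))), ClassGroup.mk0 ⟨L, hL⟩ = c.1 ∧ γ ≠ 0 ∧
      L ^ ℓ = Ideal.span {γ} := by
    rintro ⟨c, hc⟩
    obtain ⟨⟨L, hL⟩, rfl⟩ := ClassGroup.mk0_surjective c
    rw [← map_pow, SubmonoidClass.mk_pow, ClassGroup.mk0_eq_one_iff] at hc
    obtain ⟨γ, hγ⟩ := hc
    have hγ' : L ^ ℓ = Ideal.span {γ} := hγ
    refine ⟨L, γ, hL, rfl, ?_, hγ'⟩
    rintro rfl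
    have h0 : L ^ ℓ = 0 := by rw [hγ']; simp
    exact nonZeroDivisors.ne_zero hL (pow_eq_zero_iff hℓ |>.1 h0)
  choose L γ hLn hLc hγ0 hLγ using hcl
  have hD1 : (1 : ℝ) ≤ √((discr K).natAbs : ℝ) := by
    rw [Real.one_le_sqrt]
    exact_mod_cast Nat.one_le_iff_ne_zero.2 (by simpa using discr_ne_zero K)
  have hNp : ∀ j, (1 : ℝ) ≤ Ideal.absNorm (p j) := fun j => by
    exact_mod_cast Nat.one_le_iff_ne_zero.2 (by rw [Ne, Ideal.absNorm_eq_zero_iff]; exact hp0 j)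
  let Y : Fin M → ℝ := fun j => 4 ^ n * (Ideal.absNorm (p j) : ℝ) * √((discr K).natAbs : ℝ)
  have hY : ∀ j, 1 ≤ Y j := fun j => by
    have h4 : (1 : ℝ) ≤ 4 ^ n := one_le_pow₀ (by norm_num)
    exact one_le_mul_of_one_le_of_one_le (one_le_mul_of_one_le_of_one_le h4 (hNp j)) hD1
  let T : Fin M → ℝ := fun j => (Y j) ^ ((n : ℝ)⁻¹)
  have hT1 : ∀ j, 1 ≤ T j := fun j => Real.one_le_rpow (hY j) (by positivity)
  have hTn : ∀ j, T j ^ n = Y j := fun j =>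
    Real.rpow_inv_natCast_pow (by linarith [hY j]) (by omega)
  have hmink := fun (u : {c : ClassGroup (𝓞 K) // c ^ ℓ = 1} × Fin M) =>
    ev_minkowski K n hn (L u.1) (p u.2) (nonZeroDivisors.ne_zero (hLn u.1)) (hp0 u.2) ℓ hℓ (γ u.1)
      (hγ0 u.1) (hLγ u.1) (T u.2) (hT1 u.2) (by
        rw [hTn]
        have := hNp u.2
        simp only [Y]
        gcongr
        · norm_num)
  choose x a hx0 ha0 hxa hNa hw using hmink
  refine ⟨a, fun u w => ⌊Real.log (w (x u : K) / (w (γ u.1 : K)) ^ (1 / (ℓ : ℝ)))⌋, ?_, ?_, ?_, ?_⟩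
  · intro u
    refine ⟨ha0 u, ?_⟩
    have h := hNa u
    rw [hTn] at h
    have h1 := hNp u.2
    have h2 : (Ideal.absNorm (a u) : ℝ) * (Ideal.absNorm (p u.2) : ℝ) ≤
        (4 ^ n * √((discr K).natAbs : ℝ)) * (Ideal.absNorm (p u.2) : ℝ) := by
      refine h.trans (le_of_eq ?_)
      simp only [Y]; ring
    exact le_of_mul_le_mul_right h2 (by linarith)
  · intro u w
    obtain ⟨h1, h2⟩ := hw u w
    set t := w (x u : K) / (w (γ u.1 : K)) ^ (1 / (ℓ : ℝ))
    change |((⌊Real.log t⌋ : ℤ) : ℝ)| ≤ Real.log (Y u.2) + 1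
    have hY0 : 0 < Y u.2 := by linarith [hY u.2]
    rw [hTn] at h2
    have ht0 : 0 < t := lt_of_lt_of_le (by positivity) h2
    have h3 : Real.log t ≤ Real.log (Y u.2) := by
      apply Real.log_le_log ht0
      refine h1.trans ?_
      rw [← hTn]
      exact le_self_pow₀ (hT1 u.2) (by omega)
    have h4 : -Real.log (Y u.2) ≤ Real.log t := by
      rw [← Real.log_inv]
      exact Real.log_le_log (by positivity) h2
    have e1 := Int.lt_floor_add_one (Real.log t)
    have e2 := Int.floor_le (Real.log t)
    rw [abs_le]
    constructor <;> linarith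
  · rintro ⟨c, j⟩ ⟨c', j'⟩ hab - (rfl : j = j')
    have h1 := hxa (c, j)
    have h2 := hxa (c', j)
    rw [← hab] at h2
    have : c = c' := by
      apply Subtype.ext
      rw [← hLc c, ← hLc c', ClassGroup.mk0_eq_mk0_iff]
      refine ⟨x (c', j), x (c, j), hx0 _, hx0 _, ?_⟩
      rw [h1, h2]
      simp only
      ring
    rw [this]
  · rintro ⟨c, j⟩ ⟨c', j'⟩ hab hβ (hne : j ≠ j')
    have h1 := hxa (c, j)
    have h2 := hxa (c', j')
    rw [← hab] at h2
    exact ev_collision K n hn0 hn (p j) (p j') (hp j) (hp j') (hp0 j) (hp0 j') (hinj.ne hne) ℓ hℓ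
      (hur j) (hext j) (L c) (L c') (a (c, j)) (γ c) (γ c') (x (c, j)) (x (c', j')) (hγ0 c)
      (hγ0 c') (hx0 _) (hx0 _) (hLγ c) (hLγ c') h1 h2 (fun w => congrFun hβ w)

theorem ev_count {α A ι : Type*} [Fintype α] [DecidableEq A] [Fintype ι] [DecidableEq ι]
    (a : α → A) (β : α → ι → ℤ) (m : ℕ) (hm : ∀ u w, |β u w| ≤ m)
    (hinj : ∀ u v, a u = a v → β u = β v → u = v) :
    Fintype.card α ≤ (Finset.univ.image a).card * (2 * m + 1) ^ Fintype.card ι := by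
  classical
  have h := Finset.card_le_card_of_injOn (s := (Finset.univ : Finset α))
    (t := (Finset.univ.image a) ×ˢ Fintype.piFinset (fun _ : ι => Finset.Icc (-(m : ℤ)) m))
    (fun u => (a u, β u)) (by
      intro u _
      simp only [Finset.coe_product, Set.mem_prod, Finset.mem_coe, Fintype.mem_piFinset,
        Finset.mem_Icc]
      refine ⟨Finset.mem_image_of_mem _ (Finset.mem_univ _), fun w => ?_⟩
      exact abs_le.mp (hm u w)) (by
      intro u _ v _ huv
      simp only [Prod.mk.injEq] at huv
      exact hinj u v huv.1 huv.2)
  rw [Finset.card_univ, Finset.card_product, Fintype.card_piFinset] at h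
  simp only [Int.card_Icc, Finset.prod_const, Finset.card_univ] at h
  have e : ((m : ℤ) + 1 - -(m : ℤ)).toNat = 2 * m + 1 := by omega
  rwa [e] at h

theorem ev_places (K : Type*) [Field K] [NumberField K] :
    Fintype.card (InfinitePlace K) ≤ Module.finrank ℚ K := by
  rw [← InfinitePlace.sum_mult_eq (K := K), Fintype.card_eq_sum_ones]
  exact Finset.sum_le_sum fun w _ => InfinitePlace.mult_pos

theorem ev_ne_bot (K : Type*) [Field K] [NumberField K] (hn : 2 ≤ Module.finrank ℚ K)
    (p : Ideal (𝓞 K))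
    (hext : ¬ ∃ K₀ : IntermediateField ℚ K, K₀ ≠ ⊤ ∧ ∃ 𝔭₀ : Ideal (𝓞 K₀),
        𝔭₀.IsPrime ∧ Ideal.map (algebraMap (𝓞 K₀) (𝓞 K)) 𝔭₀ = p) : p ≠ ⊥ := by
  rintro rfl
  refine hext ⟨⊥, ?_, ⊥, Ideal.isPrime_bot, Ideal.map_bot⟩
  intro h
  have h1 : Module.finrank ℚ (⊥ : IntermediateField ℚ K) = 1 := IntermediateField.finrank_bot
  rw [h, IntermediateField.finrank_top'] at h1
  omega

theorem ev_D0 (D N η W : ℝ) (k : ℕ) (hD : 1 ≤ D) (hN0 : 0 ≤ N) (hN : N < D ^ η) (hk : η * k < 1)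
    (hW : 0 ≤ W) (h : D ≤ N ^ k * W) : D ≤ W ^ (1 / (1 - η * k)) := by
  have hD0 : 0 < D := by linarith
  have h1 : D ≤ D ^ (η * k) * W := by
    refine h.trans ?_
    rw [Real.rpow_mul hD0.le, Real.rpow_natCast]
    gcongr
  have hθ : 0 < 1 - η * k := by linarith
  have h2 : D ^ (1 - η * k) ≤ W := by
    rw [Real.rpow_sub hD0, Real.rpow_one, div_le_iff₀ (Real.rpow_pos_of_pos hD0 _)]
    linarith
  calc D = (D ^ (1 - η * k)) ^ (1 / (1 - η * k)) := by
        rw [← Real.rpow_mul hD0.le, mul_one_div_cancel hθ.ne', Real.rpow_one]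
    _ ≤ _ := Real.rpow_le_rpow (Real.rpow_nonneg hD0.le _) h2 (by positivity)

theorem ev_box (n : ℕ) (hn : 1 ≤ n) (η ε D : ℝ) (hε : 0 < ε) (hD : 1 ≤ D) (N : ℝ) (hN : 1 ≤ N)
    (hNη : N < D ^ η) :
    Real.log (4 ^ n * N * √D) + 1 ≤ n * Real.log 4 + (|η| + 1 / 2) * Real.log D + 1 := by
  have hD0 : 0 < D := by linarith
  have h1 : Real.log N ≤ η * Real.log D := by
    rw [← Real.log_rpow hD0]
    exact Real.log_le_log (by linarith) hNη.le
  have h2 : 0 ≤ Real.log D := Real.log_nonneg hD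
  rw [Real.log_mul (by positivity) (by positivity), Real.log_mul (by positivity) (by positivity),
    Real.log_pow, Real.log_sqrt hD0.le]
  nlinarith [le_abs_self η]

theorem ev_box2 (n : ℕ) (hn : 1 ≤ n) (η ε D : ℝ) (hε : 0 < ε) (hD : 1 ≤ D) (m r : ℕ)
    (hr : r ≤ n) (hm : (m : ℝ) ≤ n * Real.log 4 + (|η| + 1 / 2) * Real.log D + 2) :
    ((2 * m + 1 : ℕ) : ℝ) ^ r ≤
      (2 * (n * Real.log 4) + 5 + 2 * (|η| + 1 / 2) / (ε / (2 * n))) ^ n * D ^ (ε / 2) := by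
  have hD0 : 0 < D := by linarith
  have hn0 : (0 : ℝ) < n := by exact_mod_cast hn
  set κ : ℝ := ε / (2 * n) with hκ
  have hκ0 : 0 < κ := by positivity
  have h1 : Real.log D ≤ D ^ κ / κ := Real.log_le_rpow_div hD0.le hκ0
  have h2 : 1 ≤ D ^ κ := Real.one_le_rpow hD hκ0.le
  have h4 : 0 ≤ Real.log 4 := Real.log_nonneg (by norm_num)
  have h3 : ((2 * m + 1 : ℕ) : ℝ) ≤
      (2 * (n * Real.log 4) + 5 + 2 * (|η| + 1 / 2) / κ) * D ^ κ := by
    push_cast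
    have h5 : (|η| + 1 / 2) * Real.log D ≤ (|η| + 1 / 2) * (D ^ κ / κ) := by gcongr
    have h6 : (2 * (n * Real.log 4) + 5) * 1 ≤ (2 * (n * Real.log 4) + 5) * D ^ κ := by gcongr
    have h7 : 2 * (|η| + 1 / 2) / κ * D ^ κ = 2 * ((|η| + 1 / 2) * (D ^ κ / κ)) := by ring
    rw [add_mul, h7]
    linarith
  calc ((2 * m + 1 : ℕ) : ℝ) ^ r ≤ ((2 * m + 1 : ℕ) : ℝ) ^ n :=
        pow_le_pow_right₀ (by push_cast; linarith [(Nat.cast_nonneg m : (0 : ℝ) ≤ m)]) hr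
    _ ≤ ((2 * (n * Real.log 4) + 5 + 2 * (|η| + 1 / 2) / κ) * D ^ κ) ^ n := by gcongr
    _ = _ := by
        rw [mul_pow, ← Real.rpow_natCast (D ^ κ), ← Real.rpow_mul hD0.le]
        congr 2
        rw [hκ]
        field_simp

/-- **Ellenberg–Venkatesh criterion.** Fix a degree `n ≥ 2`, an integer `ℓ ≥ 2`, a real
`η < 1/(2ℓ(n-1))`, and `ε > 0`. There is a constant `C = C(n,ℓ,η,ε)` such that: if `K/ℚ`
has degree `n` and `𝔭₁, …, 𝔭_M` are `M` distinct prime ideals of `𝓞 K`, each of absolute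
norm `< D_K^η`, each unramified in `K/ℚ`, and none an extension of a prime ideal from a
proper subfield of `K`, then `|Cl_K[ℓ]| ≤ C · D_K^{1/2+ε} · M⁻¹`. -/
theorem ellenberg_venkatesh_criterion (n : ℕ) (hn : 2 ≤ n) (ℓ : ℕ) (hℓ : 2 ≤ ℓ)
    (η : ℝ) (hη : η < 1 / (2 * (ℓ : ℝ) * ((n : ℝ) - 1))) (ε : ℝ) (hε : 0 < ε) :
    ∃ C : ℝ, 0 < C ∧ ∀ (K : Type) [Field K] [NumberField K],
      Module.finrank ℚ K = n →
      ∀ (M : ℕ), 0 < M → ∀ 𝔭 : Fin M → Ideal (𝓞 K),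
      Function.Injective 𝔭 →
      (∀ j, (𝔭 j).IsPrime) →
      (∀ j, (Ideal.absNorm (𝔭 j) : ℝ) < ((NumberField.discr K).natAbs : ℝ) ^ η) →
      (∀ j, ∀ q : ℕ, q.Prime → (q : 𝓞 K) ∈ 𝔭 j →
        ¬ (𝔭 j) ^ 2 ∣ Ideal.span {(q : 𝓞 K)}) →
      (∀ j, ¬ ∃ K₀ : IntermediateField ℚ K, K₀ ≠ ⊤ ∧ ∃ 𝔭₀ : Ideal (𝓞 K₀),
        𝔭₀.IsPrime ∧ Ideal.map (algebraMap (𝓞 K₀) (𝓞 K)) 𝔭₀ = 𝔭 j) →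
      (clTor K ℓ : ℝ) ≤
        C * ((NumberField.discr K).natAbs : ℝ) ^ ((1 : ℝ) / 2 + ε) * (M : ℝ)⁻¹ := by
  classical
  obtain ⟨C₁, hC₁, hcard⟩ := ev_card_ideals n ε hε
  set W : ℝ := (2 * Real.exp ℓ) ^ (n * n * 2) with hWdef
  have hW0 : 0 < W := by positivity
  set k : ℕ := 2 * ℓ * (n - 1) with hkdef
  have hk : η * k < 1 := by
    have hn1 : (0 : ℝ) < (n : ℝ) - 1 := by
      have : (2 : ℝ) ≤ n := by exact_mod_cast hn
      linarith
    have hl : (0 : ℝ) < ℓ := by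
      have : (2 : ℝ) ≤ ℓ := by exact_mod_cast hℓ
      linarith
    have hkc : (k : ℝ) = 2 * (ℓ : ℝ) * ((n : ℝ) - 1) := by
      rw [hkdef]
      push_cast [Nat.cast_sub (show 1 ≤ n by omega)]
      ring
    rw [hkc]
    rwa [lt_div_iff₀ (by positivity)] at hη
  set D0 : ℝ := W ^ (1 / (1 - η * k)) with hD0def
  have hD0pos : 0 < D0 := Real.rpow_pos_of_pos hW0 _
  set Q : ℝ := C₁ * (D0 ^ |η|) ^ (1 + ε) with hQ
  have hQ0 : 0 < Q := by positivity
  set A : ℝ := 2 * (n * Real.log 4) + 5 + 2 * (|η| + 1 / 2) / (ε / (2 * n)) with hA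
  have hA0 : 0 < A := by
    have h4 : 0 ≤ Real.log 4 := Real.log_nonneg (by norm_num)
    positivity
  refine ⟨C₁ * ((4 : ℝ) ^ n) ^ (1 + ε) * A ^ n * (1 + Q), by positivity, ?_⟩
  intro K _ _ hK M hM p hinj hp hN hur hext
  have hp0 : ∀ j, p j ≠ ⊥ := fun j => ev_ne_bot K (by omega) (p j) (hext j)
  obtain ⟨a, β, ha, hβ, hsame, hdiff⟩ := ev_data K n (by omega) hK ℓ (by omega) M p hinj hp hur
    hext hp0
  set D : ℝ := ((discr K).natAbs : ℝ) with hDdef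
  have hD1 : 1 ≤ D := by
    have : 1 ≤ (discr K).natAbs := Int.natAbs_pos.mpr (discr_ne_zero K)
    rw [hDdef]
    exact Nat.one_le_cast.mpr this
  have hDpos : 0 < D := by linarith
  have hNp : ∀ j, (1 : ℝ) ≤ (Ideal.absNorm (p j) : ℝ) := by
    intro j
    have : Ideal.absNorm (p j) ≠ 0 := fun h => hp0 j (Ideal.absNorm_eq_zero_iff.mp h)
    exact_mod_cast Nat.one_le_iff_ne_zero.mpr this
  have hL0 : 0 ≤ Real.log D := Real.log_nonneg hD1
  have h40 : 0 ≤ Real.log 4 := Real.log_nonneg (by norm_num)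
  set Λ : ℝ := n * Real.log 4 + (|η| + 1 / 2) * Real.log D + 1 with hΛ
  have hΛ0 : 0 ≤ Λ := by positivity
  set m : ℕ := ⌊Λ⌋₊ with hm
  have hβm : ∀ u w, |β u w| ≤ (m : ℤ) := by
    intro u w
    have h1 := (hβ u w).trans (ev_box n (by omega) η ε D hε hD1 _ (hNp u.2) (hN u.2))
    have h2 : (((β u w).natAbs : ℕ) : ℝ) ≤ Λ := by
      rw [Nat.cast_natAbs]
      push_cast
      exact h1
    have h3 : (β u w).natAbs ≤ m := Nat.le_floor h2
    rw [Int.abs_eq_natAbs]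
    exact_mod_cast h3
  have hbox : ((2 * m + 1 : ℕ) : ℝ) ^ Fintype.card (InfinitePlace K) ≤ A ^ n * D ^ (ε / 2) := by
    refine ev_box2 n (by omega) η ε D hε hD1 m _ (hK ▸ ev_places K) ?_
    have := Nat.floor_le hΛ0
    linarith
  haveI : Fintype {c : ClassGroup (𝓞 K) // c ^ ℓ = 1} := Fintype.ofFinite _
  have hcl : clTor K ℓ = Fintype.card {c : ClassGroup (𝓞 K) // c ^ ℓ = 1} :=
    Nat.card_eq_fintype_card
  have hS : ∀ S : Finset (Ideal (𝓞 K)), (∀ I ∈ S, ∃ u, a u = I) →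
      (S.card : ℝ) ≤ C₁ * (4 ^ n * √D) ^ (1 + ε) := by
    intro S hS
    refine hcard K hK S _ (by positivity) ?_
    intro I hI
    obtain ⟨u, rfl⟩ := hS I hI
    exact ha u
  have hmain : (clTor K ℓ : ℝ) * M ≤
      (C₁ * (4 ^ n * √D) ^ (1 + ε)) * (A ^ n * D ^ (ε / 2)) * (1 + Q) := by
    rw [hcl]
    by_cases hDD : D ≤ D0
    · have hMQ : (M : ℝ) ≤ 1 + Q := by
        have h1 := hcard K hK (Finset.univ.image p) (D0 ^ |η|) (by positivity) (by
          intro I hI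
          obtain ⟨j, -, rfl⟩ := Finset.mem_image.mp hI
          refine ⟨hp0 j, (hN j).le.trans ?_⟩
          calc D ^ η ≤ D ^ |η| := Real.rpow_le_rpow_of_exponent_le hD1 (le_abs_self η)
            _ ≤ D0 ^ |η| := Real.rpow_le_rpow hDpos.le hDD (abs_nonneg _))
        rw [Finset.card_image_of_injective _ hinj, Finset.card_univ, Fintype.card_fin] at h1
        linarith
      have h2 := ev_count (fun c => a (c, ⟨0, hM⟩)) (fun c => β (c, ⟨0, hM⟩)) m
        (fun u w => hβm _ w) (fun u v h h' => congrArg Prod.fst (hsame _ _ h h' rfl))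
      have h3 : (Fintype.card {c : ClassGroup (𝓞 K) // c ^ ℓ = 1} : ℝ) ≤
          (C₁ * (4 ^ n * √D) ^ (1 + ε)) * (A ^ n * D ^ (ε / 2)) := by
        refine (show (_ : ℝ) ≤ _ from by exact_mod_cast h2 : _ ≤
          ((Finset.univ.image (fun c => a (c, ⟨0, hM⟩))).card : ℝ) *
          ((2 * m + 1 : ℕ) : ℝ) ^ Fintype.card (InfinitePlace K)).trans ?_
        refine mul_le_mul (hS _ ?_) hbox (by positivity) (by positivity)
        intro I hI
        obtain ⟨c, -, rfl⟩ := Finset.mem_image.mp hI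
        exact ⟨_, rfl⟩
      exact mul_le_mul h3 hMQ (by positivity) (by positivity)
    · have h2 := ev_count a β m hβm (by
        intro u v h h'
        by_cases huv : u.2 = v.2
        · exact hsame u v h h' huv
        · exact absurd (ev_D0 D _ η W k hD1 (by positivity) (hN v.2) hk hW0.le
            (hdiff u v h h' huv)) hDD)
      rw [Fintype.card_prod, Fintype.card_fin] at h2
      have h3 : (Fintype.card {c : ClassGroup (𝓞 K) // c ^ ℓ = 1} : ℝ) * M ≤
          (C₁ * (4 ^ n * √D) ^ (1 + ε)) * (A ^ n * D ^ (ε / 2)) := by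
        refine (show (_ : ℝ) ≤ _ from by exact_mod_cast h2 : _ ≤
          ((Finset.univ.image a).card : ℝ) *
          ((2 * m + 1 : ℕ) : ℝ) ^ Fintype.card (InfinitePlace K)).trans ?_
        refine mul_le_mul (hS _ ?_) hbox (by positivity) (by positivity)
        intro I hI
        obtain ⟨c, -, rfl⟩ := Finset.mem_image.mp hI
        exact ⟨_, rfl⟩
      exact h3.trans (le_mul_of_one_le_right (by positivity) (by linarith))
  have hM0 : (0 : ℝ) < M := by exact_mod_cast hM
  rw [← div_eq_mul_inv, le_div_iff₀ hM0]
  refine hmain.trans (le_of_eq ?_)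
  have e1 : ((4 : ℝ) ^ n * √D) ^ (1 + ε) = ((4 : ℝ) ^ n) ^ (1 + ε) * D ^ (1 / 2 * (1 + ε)) := by
    rw [Real.mul_rpow (by positivity) (by positivity), Real.sqrt_eq_rpow, Real.rpow_mul hDpos.le]
  have e2 : D ^ ((1 : ℝ) / 2 + ε) = D ^ (1 / 2 * (1 + ε)) * D ^ (ε / 2) := by
    rw [← Real.rpow_add hDpos]
    congr 1
    ring
  rw [e1, e2]
  ring
end
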